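/- Any permutation class with finitely many sum-indecomposable permutations and an unbounded growth function exhibits a Wilf collapse. -/

import Mathlib

open Filter Asymptotics

/-- A (finite) permutation: a size `n` together with a bijection of `Fin n`,
thought of in one-line notation as the sequence `π 0, π 1, …, π (n-1)`. -/
abbrev PPerm : Type := Σ n : ℕ, Equiv.Perm (Fin n)

/-- Pattern containment: `π ≤ τ` iff `τ` has a subsequence (a strictly increasing choice
of positions) whose entries are in the same relative order as `π`. -/
def PatternLE (π τ : PPerm) : Prop :=
  ∃ g : Fin π.1 → Fin τ.1, StrictMono g ∧
    ∀ i j : Fin π.1, π.2 i < π.2 j ↔ τ.2 (g i) < τ.2 (g j)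

/-- A permutation class: a set of permutations closed downward under containment. -/
def IsPermClass (C : Set PPerm) : Prop :=
  ∀ π τ : PPerm, PatternLE π τ → τ ∈ C → π ∈ C

/-- `cnt C n` is the number `c_n` of permutations of size `n` in `C`. -/
noncomputable def cnt (C : Set PPerm) (n : ℕ) : ℕ :=
  Set.ncard {τ : PPerm | τ ∈ C ∧ τ.1 = n}

/-- The number of permutations of size `n` in `C` avoiding `α`. -/
noncomputable def avcnt (C : Set PPerm) (α : PPerm) (n : ℕ) : ℕ :=
  Set.ncard {τ : PPerm | τ ∈ C ∧ τ.1 = n ∧ ¬ PatternLE α τ}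

/-- `α` and `β` are Wilf-equivalent in `C`: for every `n`, `C` has as many size-`n`
permutations avoiding `α` as avoiding `β`. -/
def WilfEq (C : Set PPerm) (α β : PPerm) : Prop := ∀ n : ℕ, avcnt C α n = avcnt C β n

/-- `wilfcnt C n` is the number `w_n` of Wilf(-equivalence) classes formed by the
size-`n` permutations of `C`. -/
noncomputable def wilfcnt (C : Set PPerm) (n : ℕ) : ℕ :=
  Set.ncard {S : Set PPerm | ∃ α : PPerm, α ∈ C ∧ α.1 = n ∧
    S = {β : PPerm | β ∈ C ∧ β.1 = n ∧ WilfEq C α β}}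

/-- `C` has a *Wilf collapse* if `w_n = o(c_n)`. -/
def WilfCollapse (C : Set PPerm) : Prop :=
  (fun n => (wilfcnt C n : ℝ)) =o[atTop] fun n => (cnt C n : ℝ)

/-- `C` has an *exponential Wilf collapse* if `w_n = o(rⁿ·c_n)` for some `r < 1`. -/
def ExpWilfCollapse (C : Set PPerm) : Prop :=
  ∃ r : ℝ, r < 1 ∧
    (fun n => (wilfcnt C n : ℝ)) =o[atTop] fun n => r ^ n * (cnt C n : ℝ)

/-- The (direct) sum `α ⊕ β` of two permutations: `β` is placed above and to the
right of `α`. -/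
def psum (α β : PPerm) : PPerm :=
  ⟨α.1 + β.1, (finSumFinEquiv.symm.trans ((Equiv.sumCongr α.2 β.2).trans finSumFinEquiv))⟩

/-- A permutation is *sum-indecomposable* if it is nonempty and is not the sum of two
nonempty permutations. -/
def SumIndec (π : PPerm) : Prop :=
  0 < π.1 ∧ ¬ ∃ α β : PPerm, 0 < α.1 ∧ 0 < β.1 ∧ π = psum α β

/-- A set of permutations is *sum-closed* if it is closed under `⊕`. -/
def SumClosed (C : Set PPerm) : Prop :=
  ∀ α β : PPerm, α ∈ C → β ∈ C → psum α β ∈ C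

/-!
The members of the class are words over the finite alphabet of its sum-indecomposables, and
containment becomes an order on words that is compatible with concatenation. Give a word a moment,
the letter sizes weighted by position; every Wilf class of a given size contains a word of least
moment, so it suffices to show that moment-minimal words are rare.

By well-quasi-ordering, all but boundedly many words of each size have a long factor that may be
replaced by any word over some set `A` of letters. Suppose first that letters outside `A` do not fit
inside such a block. Then the host of the permutation of size one and the host of a largest letter
of `A` may trade places in the words containing a given word, which yields a Wilf equivalence that
lowers the moment; hence the block of a moment-minimal word avoids a fixed word over `A`. (If `A`
has only the permutation of size one, there are two blocks, and such letters move from the first to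
the second.) Otherwise, some letter outside `A` fits anywhere in the block. In both cases there is a
marker, absent from the block, that may be substituted for any one of `m` pieces of the block. Since
the marker shows where the substitution took place, `m` times the number of moment-minimal words is
at most a constant, not depending on `m`, times the number of all words, plus an error bounded in
terms of `m`. The number of all words tends to infinity, so this error is negligible.
-/

/-- A containment order on the words over `σ`, compatible with concatenation and graded by the
total size of the letters. The model is the set of direct sums of a class: letters are
sum-indecomposable permutations, `le` is pattern containment and `one` is the permutation of
size one. -/
structure WordOrder (σ : Type*) where
  size : σ → ℕ
  le : List σ → List σ → Prop
  one : σ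
  size_pos : ∀ a, 0 < size a
  size_one : size one = 1
  refl : ∀ w, le w w
  trans : ∀ {u v w}, le u v → le v w → le u w
  nil_le : ∀ w, le [] w
  append : ∀ {u u' v v'}, le u u' → le v v' → le (u ++ v) (u' ++ v')
  split : ∀ {w u v}, le w (u ++ v) → ∃ w₁ w₂, w = w₁ ++ w₂ ∧ le w₁ u ∧ le w₂ v
  sum_le : ∀ {w v}, le w v → (w.map size).sum ≤ (v.map size).sum
  eq_of_sum_eq : ∀ {w v}, le w v → (w.map size).sum = (v.map size).sum → w = v
  one_le : ∀ a, le [one] [a]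

namespace WordOrder

section Basic

variable {σ : Type*} (O : WordOrder σ)

/-- The total size of the letters of a word. -/
def weight (w : List σ) : ℕ := (w.map O.size).sum

@[simp] lemma weight_nil : O.weight [] = 0 := rfl

@[simp] lemma weight_cons (a : σ) (w : List σ) : O.weight (a :: w) = O.size a + O.weight w := by
  simp [weight]

@[simp] lemma weight_append (u v : List σ) : O.weight (u ++ v) = O.weight u + O.weight v := by
  simp [weight]

/-- The word consisting of `k` copies of the letter `one`. -/
def ones (k : ℕ) : List σ := List.replicate k O.one

@[simp] lemma length_ones (k : ℕ) : (O.ones k).length = k := List.length_replicate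

@[simp] lemma weight_ones (k : ℕ) : O.weight (O.ones k) = k := by
  simp [weight, ones, O.size_one]

@[simp] lemma ones_zero : O.ones 0 = [] := rfl

lemma ones_one : O.ones 1 = [O.one] := rfl

lemma ones_add (i j : ℕ) : O.ones (i + j) = O.ones i ++ O.ones j :=
  List.replicate_add ..

lemma length_le_weight (w : List σ) : w.length ≤ O.weight w := by
  induction w with
  | nil => simp
  | cons a w ih =>
    have := O.size_pos a
    simp only [List.length_cons, weight_cons]
    omega

lemma eq_nil_of_weight_eq_zero {w : List σ} (h : O.weight w = 0) : w = [] :=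
  List.length_eq_zero_iff.1 (Nat.le_zero.1 (h ▸ O.length_le_weight w))

variable {O}

lemma weight_mono {u v : List σ} (h : O.le u v) : O.weight u ≤ O.weight v := O.sum_le h

lemma eq_of_le_of_weight_eq {u v : List σ} (h : O.le u v) (hw : O.weight u = O.weight v) :
    u = v :=
  O.eq_of_sum_eq h hw

lemma eq_nil_of_le_nil {w : List σ} (h : O.le w []) : w = [] :=
  O.eq_nil_of_weight_eq_zero (Nat.le_zero.1 (weight_mono h))

lemma one_lt_size {c : σ} (hc : c ≠ O.one) : 1 < O.size c := by
  refine lt_of_le_of_ne (O.size_pos c) fun h => hc ?_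
  have := eq_of_le_of_weight_eq (O.one_le c) (by simp [O.size_one, ← h])
  simpa using this.symm

lemma le_of_sublist {u v : List σ} (h : u.Sublist v) : O.le u v := by
  induction h with
  | slnil => exact O.refl _
  | cons a _ ih => exact O.append (O.nil_le [a]) ih
  | cons_cons a _ ih => exact O.append (O.refl [a]) ih

lemma le_append_left (u v : List σ) : O.le u (u ++ v) :=
  le_of_sublist (List.sublist_append_left u v)

lemma le_append_right (u v : List σ) : O.le v (u ++ v) :=
  le_of_sublist (List.sublist_append_right u v)

lemma le_of_append_le_append {p s t T : List σ} (h : O.le (p ++ s) (t ++ T))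
    (hs : ∀ s₁, s₁ <+: s → O.le (p ++ s₁) t → s₁ = []) : O.le s T := by
  obtain ⟨w₁, w₂, hw, h₁, h₂⟩ := O.split h
  rcases List.append_eq_append_iff.1 hw with ⟨s₁, rfl, rfl⟩ | ⟨y, rfl, rfl⟩
  · obtain rfl := hs s₁ (List.prefix_append _ _) h₁
    exact h₂
  · exact O.trans (le_append_right _ _) h₂

lemma exists_suffix_append_le_singleton {p s t : List σ} {c : σ} (h : O.le (p ++ s) (t ++ [c]))
    (hp : ¬ O.le p t) : ∃ p₂, p₂ ≠ [] ∧ p₂ <:+ p ∧ O.le (p₂ ++ s) [c] := by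
  obtain ⟨w₁, w₂, hw, h₁, h₂⟩ := O.split h
  rcases List.append_eq_append_iff.1 hw with ⟨y, rfl, rfl⟩ | ⟨p₂, rfl, rfl⟩
  · exact absurd (O.trans (le_append_left _ _) h₁) hp
  · refine ⟨p₂, ?_, List.suffix_append _ _, h₂⟩
    rintro rfl
    exact hp (by simpa using h₁)

end Basic

end WordOrder

/-- A set of words none of which is a proper prefix of another. A word then has at most one
prefix in the set, which makes cutting off that prefix reversible. -/
def PrefixCode {σ : Type*} (X : Set (List σ)) : Prop :=
  ∀ u ∈ X, ∀ v ∈ X, u <+: v → u = v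

namespace PrefixCode

variable {σ : Type*} {X : Set (List σ)}

lemma append_inj (hX : PrefixCode X) {u u' v v' : List σ} (hu : u ∈ X) (hu' : u' ∈ X)
    (h : u ++ v = u' ++ v') : u = u' ∧ v = v' := by
  have huu' : u = u' := by
    rcases List.prefix_or_prefix_of_prefix (List.prefix_append u v)
      (h ▸ List.prefix_append u' v') with h' | h'
    · exact hX u hu u' hu' h'
    · exact (hX u' hu' u hu h').symm
  exact ⟨huu', List.append_cancel_left (huu' ▸ h)⟩

lemma singleton_nil : PrefixCode ({[]} : Set (List σ)) := by
  rintro u rfl v rfl -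
  rfl

lemma setOf_length_eq (k : ℕ) : PrefixCode {u : List σ | u.length = k} :=
  fun _ hu _ hv h => h.eq_of_length (hu.trans hv.symm)

end PrefixCode

namespace WordOrder

section MinPrefix

variable {σ : Type*} (O : WordOrder σ)

/-- The words that contain `p` while none of their proper prefixes does. -/
def minPrefixes (p : List σ) : Set (List σ) :=
  {t | O.le p t ∧ ∀ t', t' <+: t → O.le p t' → t' = t}

lemma prefixCode_minPrefixes (p : List σ) : PrefixCode (O.minPrefixes p) :=
  fun u hu _ hv h => hv.2 u h hu.1

variable {O}

lemma exists_minPrefix {p t : List σ} (h : O.le p t) :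
    ∃ t₁ ∈ O.minPrefixes p, ∃ t₂, t = t₁ ++ t₂ := by
  induction t using List.reverseRecOn with
  | nil => exact ⟨[], ⟨h, fun t' ht' _ => List.prefix_nil.1 ht'⟩, [], rfl⟩
  | append_singleton t a ih =>
    by_cases ht : O.le p t
    · obtain ⟨t₁, ht₁, t₂, rfl⟩ := ih ht
      exact ⟨t₁, ht₁, t₂ ++ [a], List.append_assoc ..⟩
    · refine ⟨t ++ [a], ⟨h, fun t' ht' hle => ?_⟩, [], (List.append_nil _).symm⟩
      refine (List.prefix_concat_iff.1 ht').resolve_right fun hpre => ht ?_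
      exact O.trans hle (le_of_sublist hpre.sublist)

lemma not_le_of_append_singleton_mem_minPrefixes {p t : List σ} {c : σ}
    (h : t ++ [c] ∈ O.minPrefixes p) : ¬ O.le p t := fun hle => by
  simpa using congrArg List.length (h.2 t (List.prefix_append _ _) hle)

lemma eq_append_singleton_of_mem_minPrefixes {p t : List σ} (hp : p ≠ [])
    (h : t ∈ O.minPrefixes p) : ∃ t' c, t = t' ++ [c] := by
  rcases List.eq_nil_or_concat' t with rfl | h'
  · exact absurd (eq_nil_of_le_nil h.1) hp
  · exact h'

lemma le_of_append_le_append_of_size_le {p s t T : List σ} {b c : σ}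
    (ht : t ++ [c] ∈ O.minPrefixes (p ++ [b])) (hcb : O.size c ≤ O.size b)
    (h : O.le (p ++ [b] ++ s) (t ++ [c] ++ T)) : O.le s T := by
  refine le_of_append_le_append h fun s₁ _ hs₁ => O.eq_nil_of_weight_eq_zero ?_
  obtain ⟨p₂, hp₂, hsuff, hle⟩ := exists_suffix_append_le_singleton hs₁
    (not_le_of_append_singleton_mem_minPrefixes ht)
  obtain ⟨p₃, rfl, -⟩ := (List.suffix_concat_iff.1 hsuff).resolve_left hp₂
  have := weight_mono hle
  simp only [weight_append, weight_cons, weight_nil] at this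
  omega

end MinPrefix

section MaxSize

variable {σ : Type*} [Fintype σ] (O : WordOrder σ)

/-- The largest size of a letter. It bounds the length of a word contained in a single letter. -/
def maxSize : ℕ := Finset.univ.sup O.size

variable {O}

lemma length_le_maxSize {w : List σ} {a : σ} (h : O.le w [a]) : w.length ≤ O.maxSize :=
  calc w.length ≤ O.weight w := O.length_le_weight w
    _ ≤ O.weight [a] := weight_mono h
    _ = O.size a := by simp
    _ ≤ O.maxSize := Finset.le_sup (Finset.mem_univ a)

lemma le_of_append_le_append_singleton {p s t : List σ} {c : σ} (h : O.le (p ++ s) (t ++ [c]))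
    (hs : O.maxSize ≤ s.length) : O.le p t := by
  obtain ⟨w₁, w₂, hw, h₁, h₂⟩ := O.split h
  have : p <+: w₁ := List.prefix_of_prefix_length_le (List.prefix_append p s)
    (hw ▸ List.prefix_append w₁ w₂) (by
      have := congrArg List.length hw
      have := length_le_maxSize h₂
      simp only [List.length_append] at *
      omega)
  exact O.trans (le_of_sublist this.sublist) h₁

lemma le_of_append_le_cons {p s t : List σ} {c : σ} (h : O.le (s ++ p) (c :: t))
    (hs : O.maxSize ≤ s.length) : O.le p t := by
  obtain ⟨w₁, w₂, hw, h₁, h₂⟩ := O.split (u := [c]) (v := t) h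
  have : p <:+ w₂ := List.suffix_of_suffix_length_le (List.suffix_append s p)
    (hw ▸ List.suffix_append w₁ w₂) (by
      have := congrArg List.length hw
      have := length_le_maxSize h₁
      simp only [List.length_append] at *
      omega)
  exact O.trans (le_of_sublist this.sublist) h₂

lemma exists_minPrefix_of_append_le {p x s t : List σ} (h : O.le (p ++ x ++ s) t)
    (hx : O.maxSize ≤ x.length) : ∃ t₁ ∈ O.minPrefixes p, ∃ t₂, t = t₁ ++ t₂ ∧ O.le s t₂ := by
  obtain ⟨t₁, ht₁, t₂, rfl⟩ := exists_minPrefix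
    (O.trans (le_append_left p x) (O.trans (le_append_left (p ++ x) s) h))
  refine ⟨t₁, ht₁, t₂, rfl, ?_⟩
  obtain ⟨w₁, w₂, hw, h₁, h₂⟩ := O.split h
  rcases List.append_eq_append_iff.1 hw with ⟨s₁, rfl, rfl⟩ | ⟨y, -, rfl⟩
  · rcases List.eq_nil_or_concat' t₁ with rfl | ⟨t, c, rfl⟩
    · obtain ⟨-, rfl⟩ := List.append_eq_nil_iff.1 (eq_nil_of_le_nil h₁)
      exact h₂
    · refine absurd (le_of_append_le_append_singleton (s := x) (c := c) ?_ hx)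
        (not_le_of_append_singleton_mem_minPrefixes ht₁)
      exact O.trans (le_append_left _ _) h₁
  · exact O.trans (le_append_right y s) h₂

end MaxSize

end WordOrder

/-! ### Downward closed sets of words -/

section Higman

variable {σ : Type*} [Finite σ]

lemma wellQuasiOrdered_sublist : WellQuasiOrdered (List.Sublist (α := σ)) := by
  have higman := Set.PartiallyWellOrderedOn.partiallyWellOrderedOn_sublistForall₂ (α := σ) (· = ·)
    Set.finite_univ.partiallyWellOrderedOn
  intro f
  obtain ⟨i, j, hij, h⟩ := higman.exists_lt (f := f) fun n x _ => Set.mem_univ x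
  obtain ⟨l, hl, hlf⟩ := List.sublistForall₂_iff.1 h
  rw [List.forall₂_eq_eq_eq] at hl
  exact ⟨i, j, hij, hl ▸ hlf⟩

/-- The words outside `L` that are minimal for the sublist order are finite in number. -/
lemma exists_length_bound_notMem (L : Set (List σ)) :
    ∃ N, ∀ w ∉ L, ∃ β, β.Sublist w ∧ β ∉ L ∧ β.length ≤ N := by
  let basis : Set (List σ) := {β | β ∉ L ∧ ∀ β', β'.Sublist β → β' ∉ L → β' = β}
  have hanti : IsAntichain List.Sublist basis := fun β hβ γ hγ hne hsub =>
    hne (hγ.2 β hsub hβ.1)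
  obtain ⟨N, hN⟩ := ((hanti.finite_of_wellQuasiOrdered wellQuasiOrdered_sublist).image
    List.length).bddAbove
  refine ⟨N, fun w hw => ?_⟩
  obtain ⟨β, ⟨hβw, hβ⟩, hmin⟩ := (measure (List.length (α := σ))).wf.has_min
    {β | β.Sublist w ∧ β ∉ L} ⟨w, List.Sublist.refl w, hw⟩
  refine ⟨β, hβw, hβ, hN ⟨β, ⟨hβ, fun β' hβ' hβ'L => hβ'.eq_of_length_le ?_⟩, rfl⟩⟩
  exact not_lt.1 (hmin β' ⟨hβ'.trans hβw, hβ'L⟩)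

end Higman

namespace WordOrder

section Downset

variable {σ : Type*} (O : WordOrder σ)

/-- A set of words closed downward under containment. -/
def Downset (K : Set (List σ)) : Prop := ∀ ⦃u v⦄, O.le u v → v ∈ K → u ∈ K

variable {O} {K : Set (List σ)}

lemma Downset.mem_of_sublist (hK : O.Downset K) {u v : List σ} (h : u.Sublist v) (hv : v ∈ K) :
    u ∈ K :=
  hK (le_of_sublist h) hv

/-- The words that can follow the letter `c` in `K`. -/
def residual (K : Set (List σ)) (c : σ) : Set (List σ) := {v | c :: v ∈ K}

lemma downset_residual (hK : O.Downset K) (c : σ) : O.Downset (residual K c) :=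
  fun _ _ h hv => hK (O.append (O.refl [c]) h) hv

/-- A word all of whose letters lie in `A`. -/
def Over (A : Finset σ) (w : List σ) : Prop := ∀ a ∈ w, a ∈ A

lemma over_append {A : Finset σ} {u v : List σ} : Over A (u ++ v) ↔ Over A u ∧ Over A v :=
  List.forall_mem_append

lemma over_ones {A : Finset σ} (hA : O.one ∈ A) (k : ℕ) : Over A (O.ones k) :=
  fun _ ha => List.eq_of_mem_replicate ha ▸ hA

lemma eq_ones_of_over {w : List σ} (hw : Over {O.one} w) : w = O.ones w.length :=
  List.eq_replicate_iff.2 ⟨rfl, fun a ha => Finset.mem_singleton.1 (hw a ha)⟩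

lemma over_or_exists_first_notMem (A : Finset σ) (w : List σ) :
    Over A w ∨ ∃ x c v, w = x ++ c :: v ∧ Over A x ∧ c ∉ A := by
  induction w with
  | nil => exact Or.inl (List.forall_mem_nil _)
  | cons a w ih =>
    by_cases ha : a ∈ A
    · rcases ih with h | ⟨x, c, v, rfl, hx, hc⟩
      · exact Or.inl (List.forall_mem_cons.2 ⟨ha, h⟩)
      · exact Or.inr ⟨a :: x, c, v, rfl, List.forall_mem_cons.2 ⟨ha, hx⟩, hc⟩
    · exact Or.inr ⟨[], a, w, rfl, List.forall_mem_nil _, ha⟩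

variable (O) in
lemma wellFounded_downset_ssubset [Finite σ] :
    WellFounded fun K K' : {K : Set (List σ) // O.Downset K} => K.1 ⊂ K'.1 := by
  rw [RelEmbedding.wellFounded_iff_isEmpty]
  refine ⟨fun f => ?_⟩
  have hanti : ∀ i j, i ≤ j → (f j).1 ⊆ (f i).1 := by
    intro i j hij
    rcases hij.eq_or_lt with rfl | hlt
    · exact subset_rfl
    · exact (f.map_rel_iff.2 hlt).1
  have hstep : ∀ i, ∃ w, w ∈ (f i).1 ∧ w ∉ (f (i + 1)).1 := fun i =>
    Set.exists_of_ssubset (f.map_rel_iff.2 (Nat.lt_succ_self i))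
  choose w hw hw' using hstep
  obtain ⟨i, j, hij, hsub⟩ := wellQuasiOrdered_sublist w
  exact hw' i ((f (i + 1)).2.mem_of_sublist hsub (hanti (i + 1) j hij (hw j)))

section Loop

variable [Fintype σ]

open Classical in
/-- The letters that can always be put in front of a word of `K` without leaving `K`. -/
noncomputable def loop (K : Set (List σ)) : Finset σ := {a | ∀ v ∈ K, a :: v ∈ K}

@[simp] lemma mem_loop {a : σ} : a ∈ loop K ↔ ∀ v ∈ K, a :: v ∈ K := by
  simp [loop]

lemma append_mem_of_over_loop {x v : List σ} (hx : Over (loop K) x) (hv : v ∈ K) :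
    x ++ v ∈ K := by
  induction x with
  | nil => exact hv
  | cons a x ih =>
    obtain ⟨ha, hx⟩ := List.forall_mem_cons.1 hx
    exact mem_loop.1 ha _ (ih hx)

lemma Downset.one_mem_loop (hK : O.Downset K) {a : σ} (ha : a ∈ loop K) : O.one ∈ loop K :=
  mem_loop.2 fun v hv => hK (O.append (O.one_le a) (O.refl v)) (mem_loop.1 ha v hv)

lemma Downset.residual_ssubset (hK : O.Downset K) {c : σ} (hc : c ∉ loop K) :
    residual K c ⊂ K :=
  ⟨fun v hv => hK.mem_of_sublist (List.sublist_cons_self c v) hv,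
    fun h => hc (mem_loop.2 h)⟩

/-- Every strictly descending chain of downsets is finite, so statements about downsets may be
proved by passing to the residuals at the letters outside the loop. -/
lemma Downset.induction {P : ∀ K : Set (List σ), O.Downset K → Prop}
    (step : ∀ K hK, (∀ c ∉ loop K, P (residual K c) (downset_residual hK c)) → P K hK)
    {K : Set (List σ)} (hK : O.Downset K) : P K hK := by
  suffices h : ∀ K : {K : Set (List σ) // O.Downset K}, P K.1 K.2 from h ⟨K, hK⟩
  intro K
  induction K using (wellFounded_downset_ssubset O).induction with
  | _ K ih =>
    exact step K.1 K.2 fun c hc => ih ⟨_, downset_residual K.2 c⟩ (K.2.residual_ssubset hc)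

end Loop

end Downset

section Sweep

variable {σ : Type*}

/-- The letters of `A` listed `k` times over. It has every word over `A` of length at most `k`
as a sublist. -/
noncomputable def sweep (A : Finset σ) (k : ℕ) : List σ := (List.replicate k A.toList).flatten

lemma sweep_add (A : Finset σ) (i j : ℕ) : sweep A (i + j) = sweep A i ++ sweep A j := by
  simp only [sweep, List.replicate_add, List.flatten_append]

lemma over_sweep (A : Finset σ) (k : ℕ) : Over A (sweep A k) := fun a ha => by
  obtain ⟨l, hl, hal⟩ := List.mem_flatten.1 ha
  exact Finset.mem_toList.1 (List.eq_of_mem_replicate hl ▸ hal)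

lemma le_length_sweep {A : Finset σ} (hA : A.Nonempty) (k : ℕ) : k ≤ (sweep A k).length := by
  simpa [sweep] using Nat.le_mul_of_pos_right k hA.card_pos

lemma sweep_singleton (O : WordOrder σ) (k : ℕ) : sweep {O.one} k = O.ones k := by
  induction k with
  | zero => rfl
  | succ k ih => rw [sweep_add, O.ones_add, ih]; simp [sweep, ones]

lemma sublist_sweep {A : Finset σ} {w : List σ} (hw : Over A w) {k : ℕ} (hk : w.length ≤ k) :
    w.Sublist (sweep A k) := by
  induction w generalizing k with
  | nil => exact List.nil_sublist _
  | cons a w ih =>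
    obtain ⟨ha, hw⟩ := List.forall_mem_cons.1 hw
    obtain ⟨k, rfl⟩ := Nat.exists_eq_add_of_lt (Nat.lt_of_lt_of_le (Nat.succ_pos _) hk)
    rw [show 0 + k + 1 = 1 + k by ring, sweep_add]
    refine List.Sublist.append (l₁ := [a]) ?_ (ih hw (by simpa using hk))
    simpa [sweep, List.singleton_sublist] using ha

variable (O : WordOrder σ)

/-- `N` is a pumping constant for `L`: behind a factor over `A` that contains `N` sweeps of `A`,
every word over `A` may be inserted without leaving `L`. -/
def PumpConstant (L : Set (List σ)) (N : ℕ) : Prop :=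
  ∀ (A : Finset σ) (t W y v : List σ), O.le (sweep A N) W → Over A W → Over A y →
    t ++ W ++ v ∈ L → t ++ W ++ y ++ v ∈ L

variable {O}

lemma sweep_mono (A : Finset σ) {i j : ℕ} (h : i ≤ j) : O.le (sweep A i) (sweep A j) := by
  obtain ⟨k, rfl⟩ := Nat.exists_eq_add_of_le h
  exact sweep_add A i k ▸ le_append_left _ _

lemma le_sweep_of_sublist {A : Finset σ} {w w' : List σ} (h : w.Sublist w') (hw : Over A w') {k : ℕ}
    (hk : w.length ≤ k) : O.le w (sweep A k) :=
  le_of_sublist (sublist_sweep (fun a ha => hw a (h.subset ha)) hk)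

/-- Of the part inserted behind `W`, only a word of length at most `N` over `A` occurs in a minimal
obstruction, and `W` can host it together with the part of the obstruction inside `W`. -/
lemma Downset.exists_pumpConstant [Finite σ] {L : Set (List σ)} (hL : O.Downset L) :
    ∃ N, O.PumpConstant L N := by
  obtain ⟨N, hN⟩ := exists_length_bound_notMem L
  refine ⟨N, fun A t W y v hW hWA hy hmem => by_contra fun hnot => ?_⟩
  obtain ⟨β, hβ, hβL, hlen⟩ := hN _ hnot
  obtain ⟨β', β₃, rfl, hβ', h₃⟩ := List.sublist_append_iff.1 hβ
  rw [List.append_assoc] at hβ'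
  obtain ⟨β₁, β₂, rfl, h₁, h₂⟩ := List.sublist_append_iff.1 hβ'
  simp only [List.length_append] at hlen
  have hβ₂ : O.le β₂ W :=
    O.trans (le_sweep_of_sublist h₂ (over_append.2 ⟨hWA, hy⟩) (by omega)) hW
  exact hβL (hL (O.append (O.append (le_of_sublist h₁) hβ₂) (le_of_sublist h₃)) hmem)

end Sweep

/-! ### Tight blocks -/

section Tight

variable {σ : Type*} (O : WordOrder σ)

/-- Between `u` and `v`, no letter outside `A` fits among the letters of `A`: not even between
`N` sweeps of `A` on either side. If `N` is a pumping constant, the alternative is that some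
letter outside `A` can be put anywhere between `u` and `v`; see `exists_notMem_of_not_tight`. -/
def Tight (L : Set (List σ)) (N : ℕ) (u : List σ) (A : Finset σ) (v : List σ) : Prop :=
  ∀ c ∉ A, u ++ sweep A N ++ [c] ++ (sweep A N ++ v) ∉ L

variable {O} {L : Set (List σ)} {N G : ℕ} {A : Finset σ} {u v : List σ}

lemma exists_notMem_of_not_tight (hL : O.Downset L) (hN : O.PumpConstant L N)
    (h : ¬ Tight L N u A v) :
    ∃ c ∉ A, ∀ x x', Over A x → Over A x' → u ++ x ++ [c] ++ x' ++ v ∈ L := by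
  simp only [Tight, not_forall, not_not] at h
  obtain ⟨c, hc, hmem⟩ := h
  refine ⟨c, hc, fun x x' hx hx' => ?_⟩
  have hleft : u ++ sweep A N ++ x ++ ([c] ++ (sweep A N ++ v)) ∈ L :=
    hN A _ _ _ _ (O.refl _) (over_sweep A N) hx (by simpa using hmem)
  have hright : u ++ sweep A N ++ x ++ [c] ++ sweep A N ++ x' ++ v ∈ L :=
    hN A _ _ _ _ (O.refl _) (over_sweep A N) hx' (by simpa using hleft)
  refine hL ?_ hright
  refine O.append (O.append ?_ (O.refl _)) (O.refl _)
  refine O.trans ?_ (le_append_left _ (sweep A N))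
  exact O.append (O.append (le_append_left _ _) (O.refl _)) (O.refl _)

lemma Tight.over (hL : O.Downset L) (h : Tight L N u A v) {t₁ t₂ t₃ : List σ}
    (h₁ : O.le (u ++ sweep A N) t₁) (h₃ : O.le (sweep A N ++ v) t₃) (hmem : t₁ ++ t₂ ++ t₃ ∈ L) :
    Over A t₂ := fun c hc => by_contra fun hcA =>
  h c hcA (hL (O.append (O.append h₁ (le_of_sublist (List.singleton_sublist.2 hc))) h₃) hmem)

variable [Fintype σ]

lemma Tight.insert (hL : O.Downset L) (hN : O.PumpConstant L N) (h : Tight L N u A v)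
    (hA : A.Nonempty) (hG : 2 * N + O.maxSize ≤ G) {t₁ t₃ y : List σ}
    (h₁ : O.le (u ++ sweep A G) t₁) (h₃ : O.le (sweep A N ++ v) t₃) (hy : Over A y)
    (hmem : t₁ ++ t₃ ∈ L) : t₁ ++ y ++ t₃ ∈ L := by
  have h₁' : O.le (u ++ sweep A N ++ sweep A O.maxSize ++ sweep A N) t₁ := by
    refine O.trans ?_ h₁
    rw [List.append_assoc, List.append_assoc, ← sweep_add, ← sweep_add]
    exact O.append (O.refl u) (sweep_mono A (by omega))
  obtain ⟨x, hx, z, rfl, hz⟩ := exists_minPrefix_of_append_le h₁' (le_length_sweep hA _)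
  exact hN A x z y t₃ hz (h.over hL hx.1 h₃ hmem) hy hmem

variable {b : σ}

/-- Inside a tight block, cutting off a minimal prefix that ends with a letter `b` of largest size
among those of the block is clean: the last letter of that prefix cannot host anything after `b`. -/
lemma Tight.cut (hL : O.Downset L) (h : Tight L N u A v) (hA : A.Nonempty)
    (hb : ∀ a ∈ A, O.size a ≤ O.size b) (hG : N + O.maxSize ≤ G) {q s t T : List σ}
    (hq : ∀ y c, O.le (q ++ [b]) (y ++ [c]) → O.le (u ++ sweep A N) (t ++ y))
    (hT : O.le (q ++ [b] ++ (s ++ sweep A G ++ v)) T) (hmem : t ++ T ∈ L) :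
    ∃ y ∈ O.minPrefixes (q ++ [b]), ∃ T', T = y ++ T' ∧ O.le (s ++ sweep A G ++ v) T' := by
  have hT' : O.le (q ++ [b] ++ sweep A O.maxSize ++ (sweep A N ++ v)) T := by
    refine O.trans ?_ hT
    rw [List.append_assoc, ← List.append_assoc (sweep A _), ← sweep_add]
    refine O.append (O.refl _) (O.append ?_ (O.refl v))
    exact O.trans (sweep_mono A (by omega)) (le_append_right s _)
  obtain ⟨y, hy, T', rfl, hv⟩ := exists_minPrefix_of_append_le hT' (le_length_sweep hA _)
  obtain ⟨y, c, rfl⟩ := eq_append_singleton_of_mem_minPrefixes (by simp) hy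
  have hc : Over A [c] := h.over hL (hq y c hy.1) hv (by simpa using hmem)
  exact ⟨y ++ [c], hy, T', rfl,
    le_of_append_le_append_of_size_le hy (hb c (hc c (by simp))) hT⟩

lemma Tight.cut_letter (hL : O.Downset L) (h : Tight L N u A v) (hA : A.Nonempty)
    (hb : ∀ a ∈ A, O.size a ≤ O.size b) (hG : N + O.maxSize ≤ G) {x : σ} {s t T : List σ}
    (ht : O.le (u ++ sweep A N) t)
    (hT : O.le ([x] ++ ([b] ++ s ++ sweep A G ++ v)) T) (hmem : t ++ T ∈ L) :
    ∃ a T', T = [a] ++ T' ∧ a ∈ A ∧ O.le ([b] ++ s ++ sweep A G ++ v) T' := by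
  rcases T with - | ⟨a, T⟩
  · simpa using eq_nil_of_le_nil hT
  have ha : Over A [a] := by
    refine h.over hL ht (t₃ := T) ?_ (by simpa using hmem)
    refine le_of_append_le_cons (s := [x] ++ [b] ++ s ++ sweep A O.maxSize) (c := a) ?_ ?_
    · refine O.trans ?_ hT
      simp only [← List.append_assoc]
      refine O.append ?_ (O.refl v)
      rw [List.append_assoc, ← sweep_add]
      exact O.append (O.refl _) (sweep_mono A (by omega))
    · have := le_length_sweep hA O.maxSize
      simp only [List.length_append]
      omega
  refine ⟨a, T, rfl, ha a (by simp), le_of_append_le_append (t := [a]) hT fun s₁ hs₁ hle => ?_⟩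
  by_contra hne
  obtain ⟨s₂, rfl⟩ : ∃ s₂, s₁ = b :: s₂ := by
    rcases List.prefix_cons_iff.1 hs₁ with h' | ⟨s₂, rfl, -⟩
    exacts [absurd h' hne, ⟨s₂, rfl⟩]
  have := weight_mono hle
  have := O.size_pos x
  have := hb a (ha a (by simp))
  simp only [List.singleton_append, weight_cons, weight_nil] at *
  omega

end Tight

section Level

variable {σ : Type*} (O : WordOrder σ)

/-- The words in `S` of weight `n`. -/
def level (S : Set (List σ)) (n : ℕ) : Set (List σ) := {w ∈ S | O.weight w = n}

/-- The words in `L` that contain `α`. -/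
def above (L : Set (List σ)) (α : List σ) : Set (List σ) := {t ∈ L | O.le α t}

/-- Wilf equivalence in `L`, expressed by counting the words that contain `α` rather than those
that avoid it. -/
def WilfEquiv (L : Set (List σ)) (α β : List σ) : Prop :=
  ∀ n, (O.level (O.above L α) n).ncard = (O.level (O.above L β) n).ncard

variable {O}

lemma finite_level [Finite σ] (S : Set (List σ)) (n : ℕ) : (O.level S n).Finite :=
  (List.finite_length_le σ n).subset fun w hw => (O.length_le_weight w).trans_eq hw.2

lemma ncard_level_le_of_injOn [Finite σ] {S S' : Set (List σ)} {m n : ℕ} {f : List σ → List σ}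
    (hmaps : ∀ t ∈ S, f t ∈ S') (hweight : ∀ t ∈ S, O.weight t = n → O.weight (f t) = m)
    (hinj : Set.InjOn f S) : (O.level S n).ncard ≤ (O.level S' m).ncard :=
  Set.ncard_le_ncard_of_injOn f (fun t ht => ⟨hmaps t ht.1, hweight t ht.1 ht.2⟩)
    (hinj.mono fun _ ht => ht.1) (finite_level S' m)

lemma ncard_level_le_of_swap [Finite σ] {S S' P X Y : Set (List σ)} (hP : PrefixCode P)
    (hX : PrefixCode X) (hY : PrefixCode Y)
    (h : ∀ t ∈ S, ∃ p ∈ P, ∃ x ∈ X, ∃ y ∈ Y, ∃ s,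
      t = p ++ (x ++ (y ++ s)) ∧ p ++ (y ++ (x ++ s)) ∈ S') (n : ℕ) :
    (O.level S n).ncard ≤ (O.level S' n).ncard := by
  choose! p hp x hx y hy s ht hS' using h
  refine ncard_level_le_of_injOn hS' (fun t htS hw => ?_) fun t htS t' ht'S heq => ?_
  · rw [ht t htS] at hw
    simp only [weight_append] at hw ⊢
    omega
  · obtain ⟨hp', heq⟩ := hP.append_inj (hp t htS) (hp t' ht'S) heq
    obtain ⟨hy', heq⟩ := hY.append_inj (hy t htS) (hy t' ht'S) heq
    obtain ⟨hx', hs'⟩ := hX.append_inj (hx t htS) (hx t' ht'S) heq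
    rw [ht t htS, ht t' ht'S, hp', hx', hy', hs']

lemma ncard_level_le_of_replace [Finite σ] {S S' P : Set (List σ)} (hP : PrefixCode P)
    {x y : List σ} (h : ∀ t ∈ S, ∃ p ∈ P, ∃ s, t = p ++ (x ++ s) ∧ p ++ (y ++ s) ∈ S')
    {m n : ℕ} (hmn : n + O.weight y = m + O.weight x) :
    (O.level S n).ncard ≤ (O.level S' m).ncard := by
  choose! p hp s ht hS' using h
  refine ncard_level_le_of_injOn hS' (fun t htS hw => ?_) fun t htS t' ht'S heq => ?_
  · rw [ht t htS] at hw
    simp only [weight_append] at hw ⊢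
    omega
  · obtain ⟨hp', heq⟩ := hP.append_inj (hp t htS) (hp t' ht'S) heq
    rw [ht t htS, ht t' ht'S, hp', List.append_cancel_left heq]

end Level

section TightWilf

variable {σ : Type*} [Fintype σ] {O : WordOrder σ} {L : Set (List σ)} {N G : ℕ} {A : Finset σ}
  {u v : List σ}

lemma Tight.cut_block (hL : O.Downset L) (h : Tight L N u A v) (hA : A.Nonempty) {b : σ}
    (hb : ∀ a ∈ A, O.size a ≤ O.size b) (hG : N + O.maxSize ≤ G) {s t : List σ}
    (ht : t ∈ O.above L (u ++ sweep A G ++ [b] ++ (s ++ sweep A G ++ v))) :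
    ∃ t₁ ∈ O.minPrefixes (u ++ sweep A G ++ [b]), ∃ T, t = t₁ ++ T ∧
      O.le (s ++ sweep A G ++ v) T := by
  refine h.cut (t := []) hL hA hb hG (fun y c hyc => ?_) ht.2 ht.1
  refine le_of_append_le_append_singleton (s := sweep A O.maxSize) (c := c) (O.trans ?_ hyc)
    (le_length_sweep hA _)
  rw [List.append_assoc, ← sweep_add]
  exact O.trans (O.append (O.refl u) (sweep_mono A hG)) (le_append_left _ _)

lemma Tight.insert_letter (hL : O.Downset L) (hN : O.PumpConstant L N) (h : Tight L N u A v)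
    (hG : 2 * N + O.maxSize ≤ G) {t y T : List σ} {a : σ} (ht : O.le (u ++ sweep A G) t)
    (ha : a ∈ A) (hT : O.le (sweep A N ++ v) T) (hmem : t ++ y ++ T ∈ L) :
    t ++ ([a] ++ (y ++ T)) ∈ L ∧ t ++ (y ++ ([a] ++ T)) ∈ L := by
  have hA : A.Nonempty := ⟨a, ha⟩
  have hy : Over A y :=
    h.over hL (O.trans (O.append (O.refl u) (sweep_mono A (by omega))) ht) hT hmem
  have ha : Over A [a] := fun c hc => List.mem_singleton.1 hc ▸ ha
  have hdel : t ++ T ∈ L := hL.mem_of_sublist (by simp) hmem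
  constructor
  · simpa using h.insert hL hN hA hG ht hT (over_append.2 ⟨ha, hy⟩) hdel
  · simpa using h.insert hL hN hA hG ht hT (over_append.2 ⟨hy, ha⟩) hdel

/-- The letter that hosts `one` and the shortest factor that hosts `b` trade places. -/
theorem Tight.wilfEquiv_swap (hL : O.Downset L) (hN : O.PumpConstant L N) (h : Tight L N u A v)
    {b : σ} (hbA : b ∈ A) (hb : ∀ a ∈ A, O.size a ≤ O.size b) (hG : 2 * N + O.maxSize ≤ G) :
    O.WilfEquiv L (u ++ sweep A G ++ [b] ++ ([O.one, b, b] ++ sweep A G ++ v))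
      (u ++ sweep A G ++ [b] ++ ([b, O.one, b] ++ sweep A G ++ v)) := by
  have hA : A.Nonempty := ⟨b, hbA⟩
  have hNG : N + O.maxSize ≤ G := by omega
  have hu : ∀ {t}, O.le (u ++ sweep A G ++ [b]) t → O.le (u ++ sweep A G) t :=
    O.trans (le_append_left _ _)
  have huN : ∀ {t t'}, O.le (u ++ sweep A G ++ [b]) t → O.le (u ++ sweep A N) (t ++ t') :=
    fun ht => O.trans (O.append (O.refl u) (sweep_mono A (by omega)))
      (O.trans (hu ht) (le_append_left _ _))
  have hv : ∀ {t}, O.le ([b] ++ sweep A G ++ v) t → O.le (sweep A N ++ v) t := fun ht =>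
    O.trans (O.append (O.trans (sweep_mono A (by omega)) (le_append_right _ _)) (O.refl v)) ht
  have hP := O.prefixCode_minPrefixes (u ++ sweep A G ++ [b])
  have hX := PrefixCode.setOf_length_eq (σ := σ) 1
  have hY := O.prefixCode_minPrefixes [b]
  refine fun n => le_antisymm (ncard_level_le_of_swap hP hX hY ?_ n)
    (ncard_level_le_of_swap hP hY hX ?_ n)
  · intro t ht
    obtain ⟨p, hp, T, rfl, hT⟩ := h.cut_block hL hA hb hNG ht
    obtain ⟨a, T₁, rfl, ha, hT₁⟩ := h.cut_letter (s := [b]) hL hA hb hNG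
      (by simpa using huN (t' := []) hp.1) hT ht.1
    obtain ⟨y, hy, T₂, rfl, hT₂⟩ := h.cut (s := [b]) (t := p ++ [a]) (q := []) hL hA hb hNG
      (fun _ _ _ => by simpa using huN hp.1) (by simpa using hT₁) (by simpa using ht.1)
    refine ⟨p, hp, [a], rfl, y, hy, T₂, rfl,
      (h.insert_letter hL hN hG (hu hp.1) ha (hv hT₂) ?_).2, ?_⟩
    · exact hL.mem_of_sublist (by simp) ht.1
    · simpa using O.append hp.1 (O.append hy.1 (O.append (O.one_le a) hT₂))
  · intro t ht
    obtain ⟨p, hp, T, rfl, hT⟩ := h.cut_block hL hA hb hNG ht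
    obtain ⟨y, hy, T₁, rfl, hT₁⟩ := h.cut (s := [O.one, b]) (q := []) hL hA hb hNG
      (fun _ _ _ => huN hp.1) hT ht.1
    obtain ⟨a, T₂, rfl, ha, hT₂⟩ := h.cut_letter (s := []) (t := p ++ y) hL hA hb hNG
      (huN hp.1) hT₁ (by simpa using ht.1)
    refine ⟨p, hp, y, hy, [a], rfl, T₂, rfl,
      (h.insert_letter hL hN hG (hu hp.1) ha (hv hT₂) ?_).1, ?_⟩
    · exact hL.mem_of_sublist (by simp) ht.1
    · simpa using O.append hp.1 (O.append (O.one_le a) (O.append hy.1 hT₂))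

/-- Behind the shortest prefix hosting `u ++ ones (G + 1)`, a tight block of ones consists of ones
only, so one of them can be removed or inserted there. -/
lemma Tight.ncard_level_above_ones_succ (hL : O.Downset L) (hN : O.PumpConstant L N)
    (h : Tight L N u {O.one} v) {k : ℕ} (hk : 2 * (2 * N + O.maxSize) + 2 ≤ k) (n : ℕ) :
    (O.level (O.above L (u ++ O.ones (k + 1) ++ v)) (n + 1)).ncard =
      (O.level (O.above L (u ++ O.ones k ++ v)) n).ncard := by
  obtain ⟨G, hG⟩ : ∃ G, G = 2 * N + O.maxSize := ⟨_, rfl⟩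
  obtain ⟨j, rfl⟩ : ∃ j, k = G + 1 + (j + 1 + G) := ⟨k - 2 * G - 2, by omega⟩
  have hword : ∀ i, u ++ O.ones (G + 1 + (i + G)) ++ v =
      u ++ sweep {O.one} G ++ [O.one] ++ (O.ones i ++ sweep {O.one} G ++ v) := fun i => by
    rw [sweep_singleton, O.ones_add (G + 1), O.ones_add i, O.ones_add G, ones_one]
    simp only [List.append_assoc]
  rw [add_assoc _ _ 1, add_right_comm (j + 1) G 1, hword, hword]
  have hone : ∀ a ∈ ({O.one} : Finset σ), O.size a ≤ O.size O.one := by simp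
  have hu : O.le (u ++ sweep {O.one} N) (u ++ sweep {O.one} G ++ [O.one]) :=
    O.trans (O.append (O.refl u) (sweep_mono _ (by omega))) (le_append_left _ _)
  have hP := O.prefixCode_minPrefixes (u ++ sweep {O.one} G ++ [O.one])
  refine le_antisymm (ncard_level_le_of_replace hP (x := [O.one]) (y := []) ?_ ?_)
    (ncard_level_le_of_replace hP (x := []) (y := [O.one]) ?_ ?_)
  · intro t ht
    obtain ⟨p, hp, T, rfl, hT⟩ := h.cut_block hL (by simp) hone (by omega) ht
    obtain ⟨a, T', rfl, ha, hT'⟩ := h.cut_letter (x := O.one) (s := O.ones j) hL (by simp) hone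
      (by omega) (O.trans hu hp.1) hT ht.1
    obtain rfl := Finset.mem_singleton.1 ha
    exact ⟨p, hp, T', rfl, hL.mem_of_sublist (by simp) ht.1, O.append hp.1 hT'⟩
  · simp [O.size_one]
  · intro t ht
    obtain ⟨p, hp, T, rfl, hT⟩ := h.cut_block hL (by simp) hone (by omega) ht
    refine ⟨p, hp, T, rfl, ?_, ?_⟩
    · refine (h.insert_letter (y := []) hL hN hG.ge (O.trans (le_append_left _ _) hp.1) (by simp)
        (O.trans ?_ hT) (by simpa using ht.1)).1
      exact O.append (O.trans (sweep_mono _ (by omega)) (le_append_right _ _)) (O.refl v)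
    · have honeT : O.le ([O.one] ++ (O.ones (j + 1) ++ sweep {O.one} G ++ v)) ([O.one] ++ T) :=
        O.append (O.refl _) hT
      exact O.append hp.1 honeT
  · simp [O.size_one]

theorem Tight.wilfEquiv_ones (hL : O.Downset L) (hN : O.PumpConstant L N) {u' : List σ} {i j : ℕ}
    (h : Tight L N u {O.one} (u' ++ O.ones j ++ v))
    (h' : Tight L N (u ++ O.ones i ++ u') {O.one} v)
    (hi : 2 * (2 * N + O.maxSize) + 2 ≤ i) (hj : 2 * (2 * N + O.maxSize) + 2 ≤ j) :
    O.WilfEquiv L (u ++ O.ones (i + 1) ++ u' ++ O.ones j ++ v)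
      (u ++ O.ones i ++ u' ++ O.ones (j + 1) ++ v) := by
  rintro (_ | n)
  · have hempty : ∀ α : List σ, 0 < O.weight α → O.level (O.above L α) 0 = ∅ := fun α hα =>
      Set.eq_empty_of_forall_notMem fun t ht => by
        have := weight_mono ht.1.2
        have := ht.2
        omega
    rw [hempty, hempty] <;> simp only [weight_append, weight_ones] <;> omega
  · have hfirst := h.ncard_level_above_ones_succ hL hN hi n
    have hsecond := h'.ncard_level_above_ones_succ hL hN hj n
    simp only [List.append_assoc] at hfirst hsecond ⊢
    rw [hfirst, hsecond]

end TightWilf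

/-! ### Moment-minimal words -/

section Moment

variable {σ : Type*} (O : WordOrder σ)

/-- The sum of the letter sizes of a word, each multiplied by its position counted from zero. It
decreases when a letter `one` moves to the right past a larger letter. -/
def moment : List σ → ℕ
  | [] => 0
  | _ :: w => O.weight w + moment w

@[simp] lemma moment_append (u v : List σ) :
    O.moment (u ++ v) = O.moment u + O.moment v + u.length * O.weight v := by
  induction u with
  | nil => simp [moment]
  | cons a u ih =>
    simp only [List.cons_append, moment, weight_append, ih, List.length_cons]
    ring

variable {O}

lemma length_lt_weight {w : List σ} (hw : ∃ c ∈ w, c ≠ O.one) : w.length < O.weight w := by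
  obtain ⟨c, hc, hne⟩ := hw
  obtain ⟨u, v, rfl⟩ := List.append_of_mem hc
  have := O.length_le_weight u
  have := O.length_le_weight v
  have := one_lt_size hne
  simp only [List.length_append, List.length_cons, weight_append, weight_cons]
  omega

lemma moment_move_ones_lt {w : List σ} (hw : ∃ c ∈ w, c ≠ O.one) {k : ℕ} (hk : 0 < k)
    (u v : List σ) :
    O.moment (u ++ (w ++ O.ones k) ++ v) < O.moment (u ++ (O.ones k ++ w) ++ v) := by
  have hlt : k * w.length < k * O.weight w := Nat.mul_lt_mul_of_pos_left (length_lt_weight hw) hk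
  simp only [moment_append, weight_append, weight_ones, List.length_append, length_ones]
  linarith

variable (O) in
/-- The words of `L` that have the least moment among their Wilf-equivalents of the same weight.
They represent all Wilf classes. -/
def momentMinimal (L : Set (List σ)) : Set (List σ) :=
  {w ∈ L | ∀ w' ∈ L, O.weight w' = O.weight w → O.WilfEquiv L w w' → O.moment w ≤ O.moment w'}

lemma exists_momentMinimal {L : Set (List σ)} {w : List σ} (hw : w ∈ L) :
    ∃ w' ∈ O.momentMinimal L, O.weight w' = O.weight w ∧ O.WilfEquiv L w w' := by
  obtain ⟨w', ⟨hw'L, hweight, hequiv⟩, hmin⟩ := (measure O.moment).wf.has_min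
    {w' | w' ∈ L ∧ O.weight w' = O.weight w ∧ O.WilfEquiv L w w'} ⟨w, hw, rfl, fun _ => rfl⟩
  refine ⟨w', ⟨hw'L, fun w'' hw''L hweight' hequiv' => not_lt.1 (hmin w'' ?_)⟩, hweight, hequiv⟩
  exact ⟨hw''L, hweight'.trans hweight, fun n => (hequiv n).trans (hequiv' n)⟩

end Moment

section Minimal

variable {σ : Type*} [Fintype σ] {O : WordOrder σ} {L : Set (List σ)} {N : ℕ} {A : Finset σ}

variable (O) in
/-- The word that tight blocks of moment-minimal words avoid: in it, the distinguished `one` can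
trade places with the following `b`. -/
noncomputable def reducibleWord (N : ℕ) (A : Finset σ) (b : σ) : List σ :=
  sweep A (2 * N + O.maxSize) ++ [b] ++ ([O.one, b, b] ++ sweep A (2 * N + O.maxSize))

lemma over_reducibleWord (hA : O.one ∈ A) {b : σ} (hb : b ∈ A) :
    Over A (O.reducibleWord N A b) := by
  simp only [reducibleWord, over_append, over_sweep, true_and, and_true]
  simp [Over, hA, hb]

lemma not_tight_of_momentMinimal (hL : O.Downset L) (hN : O.PumpConstant L N) (hA : O.one ∈ A)
    {b : σ} (hbA : b ∈ A) (hb : ∀ a ∈ A, O.size a ≤ O.size b) (hb1 : b ≠ O.one) {u v : List σ}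
    (hpump : ∀ y, Over A y → u ++ y ++ v ∈ L)
    (hmin : u ++ O.reducibleWord N A b ++ v ∈ O.momentMinimal L) : ¬ Tight L N u A v := fun h => by
  set Z := sweep A (2 * N + O.maxSize) with hZ
  have hequiv := h.wilfEquiv_swap hL hN hbA hb le_rfl
  have hlt := moment_move_ones_lt (w := [b]) ⟨b, by simp, hb1⟩ one_pos (u ++ Z ++ [b])
    ([b] ++ Z ++ v)
  have hmem := hpump (Z ++ [b] ++ [b, O.one, b] ++ Z) (by
    simp only [over_append, hZ, over_sweep, true_and, and_true]
    simp [Over, hA, hbA])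
  have hle := hmin.2 _ hmem (by simp [reducibleWord, ← hZ]; ring) (by
    simpa [reducibleWord, ← hZ] using hequiv)
  simp only [reducibleWord, ← hZ, ones_one, List.append_assoc, List.cons_append,
    List.nil_append] at hle hlt
  exact hle.not_gt hlt

lemma not_tight_ones_of_momentMinimal (hL : O.Downset L) (hN : O.PumpConstant L N)
    {u u' v : List σ} {i j : ℕ} (hc : ∃ c ∈ u', c ≠ O.one)
    (hi : 2 * (2 * N + O.maxSize) + 2 ≤ i) (hj : 2 * (2 * N + O.maxSize) + 2 ≤ j)
    (hpump : ∀ i j, u ++ O.ones i ++ u' ++ O.ones j ++ v ∈ L)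
    (hmin : u ++ O.ones (i + 1) ++ u' ++ O.ones j ++ v ∈ O.momentMinimal L) :
    ¬ Tight L N u {O.one} (u' ++ O.ones j ++ v) ∨
      ¬ Tight L N (u ++ O.ones i ++ u') {O.one} v := by
  by_contra! h
  have hequiv := h.1.wilfEquiv_ones hL hN h.2 hi hj
  have hlt := moment_move_ones_lt hc one_pos (u ++ O.ones i) (O.ones j ++ v)
  have hle := hmin.2 _ (hpump i (j + 1)) (by simp; ring) hequiv
  rw [O.ones_add i, add_comm j, O.ones_add 1] at hle
  simp only [List.append_assoc] at hle hlt
  exact hle.not_gt hlt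

end Minimal

section Blocks

variable {σ : Type*} (O : WordOrder σ)

/-- A word of `K` with a long factor that may be replaced freely by other words over the same
letters, or with two or one long factors consisting of ones whose lengths may be changed freely;
failing that, a short word. The prefix in front of each factor belongs to a prefix code from `𝒳`. -/
inductive BlockShape (K : Set (List σ)) (𝒳 : Set (Set (List σ))) (R D : ℕ) : List σ → Prop
  | mixed {X : Set (List σ)} {A : Finset σ} {u x v : List σ} (hX : X ∈ 𝒳) (hu : u ∈ X)
      (hA : O.one ∈ A) (hb : ∃ b ∈ A, b ≠ O.one) (hx : Over A x) (hR : R ≤ x.length)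
      (hpump : ∀ y, Over A y → u ++ y ++ v ∈ K) : BlockShape K 𝒳 R D (u ++ x ++ v)
  | twoOnes {X X' : Set (List σ)} {u u' v : List σ} {k k' : ℕ} (hX : X ∈ 𝒳) (hu : u ∈ X)
      (hX' : X' ∈ 𝒳) (hu' : u ++ O.ones k ++ u' ∈ X') (hc : ∃ c ∈ u', c ≠ O.one)
      (hk : R ≤ k) (hk' : R ≤ k') (hpump : ∀ i j, u ++ O.ones i ++ u' ++ O.ones j ++ v ∈ K) :
      BlockShape K 𝒳 R D (u ++ O.ones k ++ u' ++ O.ones k' ++ v)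
  | oneOnes {X : Set (List σ)} {u v : List σ} {k : ℕ} (hX : X ∈ 𝒳) (hu : u ∈ X)
      (hk : R ≤ k) (hu' : u.length ≤ D) (hv : v.length ≤ D)
      (hpump : ∀ i, u ++ O.ones i ++ v ∈ K) : BlockShape K 𝒳 R D (u ++ O.ones k ++ v)
  | short {w : List σ} (hw : w.length ≤ D) : BlockShape K 𝒳 R D w

variable {O}

section Fintype

variable [Fintype σ]

/-- The words that lead, through the loop of `K` and the letter `c`, to a word of `X`. -/
def loopLift (K : Set (List σ)) (c : σ) (X : Set (List σ)) : Set (List σ) :=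
  {w | ∃ x u, Over (loop K) x ∧ u ∈ X ∧ w = x ++ c :: u}

lemma prefixCode_loopLift {K X : Set (List σ)} {c : σ} (hc : c ∉ loop K) (hX : PrefixCode X) :
    PrefixCode (loopLift K c X) := by
  rintro _ ⟨x, u, hx, hu, rfl⟩ _ ⟨x', u', hx', hu', rfl⟩ ⟨v, hv⟩
  have hcx : c ∉ x := fun h => hc (hx c h)
  have hcx' : c ∉ x' := fun h => hc (hx' c h)
  obtain ⟨rfl, huu'⟩ : x = x' ∧ u ++ v = u' := by
    rw [List.append_assoc, List.cons_append, List.append_eq_append_iff] at hv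
    rcases hv with ⟨z, rfl, hz⟩ | ⟨z, rfl, hz⟩ <;> rcases z with - | ⟨d, z⟩ <;> simp_all
  rw [hX u hu u' hu' ⟨v, huu'⟩]

lemma append_cons_mem_of_over_loop {K : Set (List σ)} {x v : List σ} {c : σ}
    (hx : Over (loop K) x) (hv : v ∈ residual K c) : x ++ c :: v ∈ K :=
  append_mem_of_over_loop hx hv

lemma BlockShape.of_over_loop {K : Set (List σ)} (hK : O.Downset K) {𝒳 : Set (Set (List σ))}
    (h𝒳 : {[]} ∈ 𝒳) {R D : ℕ} {x v : List σ} (hx : Over (loop K) x) (hR : R < x.length)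
    (hv : v ∈ K) (hD : loop K = {O.one} → O.BlockShape K 𝒳 R D (O.ones x.length ++ v)) :
    O.BlockShape K 𝒳 R D (x ++ v) := by
  obtain ⟨a, ha⟩ := List.exists_mem_of_length_pos (Nat.zero_lt_of_lt hR)
  have hone := hK.one_mem_loop (hx a ha)
  by_cases hb : ∃ b ∈ loop K, b ≠ O.one
  · exact .mixed (u := []) h𝒳 rfl hone hb hx hR.le fun y hy => append_mem_of_over_loop hy hv
  · have hloop : loop K = {O.one} :=
      Finset.eq_singleton_iff_unique_mem.2 ⟨hone, by simpa using hb⟩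
    rw [eq_ones_of_over (O := O) (hloop ▸ hx : Over {O.one} x)]
    exact hD hloop

lemma BlockShape.lift {K : Set (List σ)} (hK : O.Downset K) {c : σ} (hc : c ∉ loop K)
    {𝒳 𝒴 : Set (Set (List σ))} (h𝒴 : {[]} ∈ 𝒴) (hlift : ∀ X ∈ 𝒳, loopLift K c X ∈ 𝒴)
    {R D D' : ℕ} (hD : D + R + 1 ≤ D') {x w : List σ} (hx : Over (loop K) x)
    (hw : w ∈ residual K c) (h : O.BlockShape (residual K c) 𝒳 R D w) :
    O.BlockShape K 𝒴 R D' (x ++ c :: w) := by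
  have hmem : ∀ {X u}, u ∈ X → x ++ c :: u ∈ loopLift K c X := fun hu => ⟨x, _, hx, hu, rfl⟩
  induction h with
  | @mixed X A u y v hX hu hA hb hy hR hpump =>
    have := BlockShape.mixed (D := D') (hlift X hX) (hmem hu) hA hb hy hR (v := v) fun z hz => by
      simpa using append_cons_mem_of_over_loop hx (hpump z hz)
    simpa using this
  | @twoOnes X X' u u' v k k' hX hu hX' hu' hc' hk hk' hpump =>
    have := BlockShape.twoOnes (D := D') (hlift X hX) (hmem hu) (hlift X' hX')
      (by simpa using hmem hu') hc' hk hk' (v := v) fun i j => by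
      simpa using append_cons_mem_of_over_loop hx (hpump i j)
    simpa using this
  | @oneOnes X u v k hX hu hk hu' hv hpump =>
    rcases le_or_gt x.length R with hxR | hxR
    · have := BlockShape.oneOnes (D := D') (hlift X hX) (hmem hu) hk
        (by simp only [List.length_append, List.length_cons]; omega) (by omega) (v := v) fun i => by
        simpa using append_cons_mem_of_over_loop hx (hpump i)
      simpa using this
    · refine of_over_loop hK h𝒴 hx hxR (append_cons_mem_of_over_loop (List.forall_mem_nil _) hw)
        fun hloop => ?_
      have := BlockShape.twoOnes (D := D') (u := []) (k := x.length) (u' := c :: u) h𝒴 rfl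
        (hlift X hX) ⟨O.ones x.length, u, hloop ▸ over_ones (by simp) _, hu, rfl⟩
        ⟨c, by simp, fun h => hc (by simp [h, hloop])⟩ hxR.le hk (v := v) fun i j => by
        simpa using append_cons_mem_of_over_loop (hloop ▸ over_ones (by simp) i) (hpump j)
      simpa using this
  | @short w hw' =>
    rcases le_or_gt x.length R with hxR | hxR
    · exact .short (by simp only [List.length_append, List.length_cons]; omega)
    · refine of_over_loop hK h𝒴 hx hxR (append_cons_mem_of_over_loop (List.forall_mem_nil _) hw)
        fun hloop => ?_
      refine .oneOnes (u := []) h𝒴 rfl hxR.le (by simp)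
        (by simp only [List.length_cons]; omega) fun i => ?_
      exact append_cons_mem_of_over_loop (hloop ▸ over_ones (by simp) i) hw

end Fintype

theorem exists_blockShape [Finite σ] {K : Set (List σ)} (hK : O.Downset K) :
    ∃ 𝒳 : Set (Set (List σ)), 𝒳.Finite ∧ (∀ X ∈ 𝒳, PrefixCode X) ∧
      ∀ R, ∃ D, ∀ w ∈ K, O.BlockShape K 𝒳 R D w := by
  have := Fintype.ofFinite σ
  induction hK using Downset.induction with | step K hK ih =>
  choose! 𝒳 hfin hcode hshape using ih
  let 𝒴 : Set (Set (List σ)) := insert {[]} (⋃ c ∈ {c | c ∉ loop K}, loopLift K c '' 𝒳 c)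
  have hlift : ∀ c ∉ loop K, ∀ X ∈ 𝒳 c, loopLift K c X ∈ 𝒴 := fun c hc X hX =>
    Or.inr (Set.mem_biUnion hc ⟨X, hX, rfl⟩)
  refine ⟨𝒴, ?_, ?_, fun R => ?_⟩
  · exact ((Set.toFinite _).biUnion fun c hc => (hfin c hc).image _).insert _
  · rintro X (rfl | hX)
    · exact PrefixCode.singleton_nil
    · obtain ⟨c, hc, X, hXc, rfl⟩ := Set.mem_iUnion₂.1 hX
      exact prefixCode_loopLift hc (hcode c hc X hXc)
  · choose! D hD using fun c hc => hshape c hc R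
    refine ⟨∑ c, D c + R + 1, fun w hw => ?_⟩
    rcases over_or_exists_first_notMem (loop K) w with hover | ⟨x, c, v, rfl, hx, hc⟩
    · rcases le_or_gt w.length R with hwR | hwR
      · exact .short (by omega)
      · have hnil : [] ∈ K := hK.mem_of_sublist (List.nil_sublist w) hw
        rw [← List.append_nil w]
        refine .of_over_loop hK (Or.inl rfl) hover hwR hnil fun hloop => ?_
        refine .oneOnes (u := []) (Or.inl rfl) rfl hwR.le (Nat.zero_le _) (Nat.zero_le _)
          fun i => ?_
        exact append_mem_of_over_loop (hloop ▸ over_ones (by simp) i) hnil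
    · have hv : v ∈ residual K c := hK.mem_of_sublist (List.sublist_append_right x _) hw
      have := Finset.single_le_sum (fun c _ => Nat.zero_le (D c)) (Finset.mem_univ c)
      exact (hD c hc v hv).lift hK hc (Or.inl rfl) (hlift c hc) (by omega) hx hv

end Blocks

section Switch

variable {σ : Type*} (O : WordOrder σ)

/-- The words with a factor, behind a prefix from `X`, that does not contain `V` but consists of
at least `m` pieces of length `weight V`, each of which may be replaced by `V`, padded with ones to
preserve the weight. -/
def switchable (L X : Set (List σ)) (V : List σ) (m : ℕ) : Set (List σ) :=
  {w | ∃ u ∈ X, ∃ x v, w = u ++ (x ++ v) ∧ m * O.weight V ≤ x.length ∧ ¬ V <:+: x ∧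
    ∀ x₁ y x₂, x = x₁ ++ (y ++ x₂) → y.length = O.weight V →
      u ++ (x₁ ++ (V ++ (O.ones (O.weight y - O.weight V) ++ (x₂ ++ v)))) ∈ L}

variable {O}

lemma exists_piece_of_switchable {L X : Set (List σ)} {V w : List σ} {m j : ℕ}
    (hw : w ∈ O.switchable L X V m) (hj : j < m) :
    ∃ u ∈ X, ∃ x y s, w = u ++ (x ++ (y ++ s)) ∧ x.length = j * O.weight V ∧ y.length = O.weight V ∧
      ¬ V <:+: x ∧
      u ++ (x ++ (V ++ (O.ones (O.weight y - O.weight V) ++ s))) ∈ L := by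
  obtain ⟨u, hu, x, v, rfl, hlen, hV, hmem⟩ := hw
  set q := O.weight V
  have hjm : (j + 1) * q ≤ m * q := Nat.mul_le_mul_right q hj
  rw [add_mul, one_mul] at hjm
  have hx : x = x.take (j * q) ++ ((x.drop (j * q)).take q ++ (x.drop (j * q)).drop q) := by
    simp only [List.take_append_drop]
  have hy : ((x.drop (j * q)).take q).length = q := by
    rw [List.length_take, List.length_drop]
    omega
  refine ⟨u, hu, _, _, (x.drop (j * q)).drop q ++ v, ?_, ?_, hy, fun h => hV ?_,
    hmem _ _ _ hx hy⟩
  · conv_lhs => rw [hx]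
    simp only [List.append_assoc]
  · exact List.length_take_of_le (by omega)
  · exact h.trans (List.take_prefix _ x).isInfix

lemma eq_of_append_eq_append_of_not_isInfix {V x x' s s' : List σ} {q j j' : ℕ} (hq : V.length ≤ q)
    (hx : x.length = j * q) (hx' : x'.length = j' * q) (hV : ¬ V <:+: x) (hV' : ¬ V <:+: x')
    (h : x ++ (V ++ s) = x' ++ (V ++ s')) : j = j' := by
  by_contra hne
  wlog hlt : j < j' generalizing x x' s s' j j'
  · exact this hx' hx hV' hV h.symm (Ne.symm hne) (by omega)
  refine hV' (List.IsInfix.trans ⟨x, [], by simp⟩ (List.IsPrefix.isInfix (l₁ := x ++ V) ?_))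
  refine List.prefix_of_prefix_length_le (l₃ := x' ++ (V ++ s')) ?_ (List.prefix_append _ _) ?_
  · exact h ▸ ⟨s, by simp⟩
  · have : (j + 1) * q ≤ j' * q := Nat.mul_le_mul_right q hlt
    rw [List.length_append, hx, hx']
    linarith

/-- Mark one of the first `m` pieces of length `q` and replace it by `V`: since `V` did not occur
before, the result and the removed piece determine the original word and the mark. -/
lemma mul_ncard_level_switchable_le [Finite σ] {L X : Set (List σ)} {V : List σ}
    (hX : PrefixCode X) (m n : ℕ) :
    m * (O.level (O.switchable L X V m) n).ncard ≤
      {y : List σ | y.length = O.weight V}.ncard * (O.level L n).ncard := by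
  choose! u hu x y s hw hx hy hV hmem using
    fun w (hw : w ∈ O.switchable L X V m) j (hj : j < m) => exists_piece_of_switchable hw hj
  suffices h : (O.level (O.switchable L X V m) n ×ˢ Set.Iio m).ncard ≤
      (O.level L n ×ˢ {y : List σ | y.length = O.weight V}).ncard by
    simpa only [Set.ncard_prod, Set.ncard_Iio_nat, mul_comm] using h
  refine Set.ncard_le_ncard_of_injOn
    (fun p => (u p.1 p.2 ++ (x p.1 p.2 ++ (V ++
      (O.ones (O.weight (y p.1 p.2) - O.weight V) ++ s p.1 p.2))), y p.1 p.2)) ?_ ?_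
    ((finite_level L n).prod (List.finite_length_eq σ _))
  · rintro ⟨w, j⟩ ⟨⟨hwS, hn⟩, hj⟩
    refine ⟨⟨hmem w hwS j hj, ?_⟩, hy w hwS j hj⟩
    have := O.length_le_weight (y w j)
    have := hy w hwS j hj
    rw [hw w hwS j hj] at hn
    simp only [weight_append, weight_ones] at hn ⊢
    omega
  · rintro ⟨w, j⟩ ⟨⟨hwS, -⟩, hj⟩ ⟨w', j'⟩ ⟨⟨hwS', -⟩, hj'⟩ heq
    obtain ⟨heq, hyy'⟩ := Prod.mk.inj heq
    obtain ⟨huu', heq⟩ := hX.append_inj (hu w hwS j hj) (hu w' hwS' j' hj') heq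
    obtain rfl : j = j' := eq_of_append_eq_append_of_not_isInfix
      (O.length_le_weight V) (hx w hwS j hj) (hx w' hwS' j' hj') (hV w hwS j hj)
      (hV w' hwS' j' hj') heq
    obtain ⟨hxx', heq⟩ := List.append_inj heq ((hx w hwS j hj).trans (hx w' hwS' j hj').symm)
    dsimp only at hyy'
    rw [hyy'] at heq
    have hss' := List.append_cancel_left (List.append_cancel_left heq)
    rw [Prod.mk.injEq, hw w hwS j hj, hw w' hwS' j hj', huu', hxx', hyy', hss']
    exact ⟨rfl, rfl⟩

end Switch

end WordOrder

lemma isLittleO_of_forall_mul_le {a b : ℕ → ℕ} {C : ℕ}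
    (h : ∀ m : ℕ, ∃ B, ∀ n, m * a n ≤ C * b n + B) (hb : Tendsto b atTop atTop) :
    (fun n => (a n : ℝ)) =o[atTop] fun n => (b n : ℝ) := by
  refine isLittleO_iff.2 fun ε hε => ?_
  obtain ⟨m, hm⟩ := exists_nat_gt ((C + 1) / ε)
  have hm0 : (0 : ℝ) < m := lt_trans (by positivity) hm
  obtain ⟨B, hB⟩ := h m
  filter_upwards [hb.eventually_ge_atTop B] with n hn
  simp only [Real.norm_natCast]
  refine le_of_mul_le_mul_left ?_ hm0
  calc (m : ℝ) * a n ≤ C * b n + B := mod_cast hB n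
    _ ≤ (C + 1) * b n := by
      have : (B : ℝ) ≤ b n := mod_cast hn
      linarith
    _ ≤ m * ε * b n := by
      gcongr
      exact ((div_lt_iff₀ hε).1 hm).le
    _ = m * (ε * b n) := mul_assoc _ _ _

namespace WordOrder

section Sparse

variable {σ : Type*} (O : WordOrder σ)

/-- The words that consist of ones apart from their first `D` and last `D` letters. -/
def sparse (D : ℕ) : Set (List σ) :=
  {w | ∃ u k v, w = u ++ O.ones k ++ v ∧ u.length ≤ D ∧ v.length ≤ D}

lemma ncard_level_sparse_le [Finite σ] (D n : ℕ) :
    (O.level (O.sparse D) n).ncard ≤ {w : List σ | w.length ≤ D}.ncard ^ 2 := by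
  have hfin := List.finite_length_le σ D
  rw [sq, ← Set.ncard_prod]
  refine (Set.ncard_le_ncard ?_ ((hfin.prod hfin).image fun p =>
    p.1 ++ O.ones (n - O.weight p.1 - O.weight p.2) ++ p.2)).trans
    (Set.ncard_image_le (hfin.prod hfin))
  rintro w ⟨⟨u, k, v, rfl, hu, hv⟩, hn⟩
  simp only [weight_append, weight_ones] at hn
  have hk : n - O.weight u - O.weight v = k := by omega
  exact ⟨(u, v), ⟨hu, hv⟩, by simp only [hk]⟩

end Sparse

section TwoRuns

variable {σ : Type*} (O : WordOrder σ)

/-- Some words of `L` have two runs of ones, separated by a larger letter, whose lengths may be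
changed freely. -/
def TwoRuns (L : Set (List σ)) : Prop :=
  ∃ u u' v, (∃ c ∈ u', c ≠ O.one) ∧ ∀ i j, u ++ O.ones i ++ u' ++ O.ones j ++ v ∈ L

variable {O} {L : Set (List σ)}

lemma moment_twoRuns_lt {u' : List σ} (hc : ∃ c ∈ u', c ≠ O.one) {k : ℕ} (hk : 0 < k)
    (u v : List σ) (i j : ℕ) :
    O.moment (u ++ O.ones i ++ u' ++ O.ones (k + j) ++ v) <
      O.moment (u ++ O.ones (i + k) ++ u' ++ O.ones j ++ v) := by
  simpa only [ones_add, List.append_assoc] using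
    moment_move_ones_lt hc hk (u ++ O.ones i) (O.ones j ++ v)

lemma TwoRuns.tendsto_ncard_level [Finite σ] (h : O.TwoRuns L) :
    Tendsto (fun n => (O.level L n).ncard) atTop atTop := by
  obtain ⟨u, u', v, hc, hL⟩ := h
  refine tendsto_atTop.2 fun B => ?_
  filter_upwards [eventually_ge_atTop (O.weight (u ++ u' ++ v) + B)] with n hn
  simp only [weight_append] at hn
  obtain ⟨s, hs⟩ := Nat.exists_eq_add_of_le (le_of_add_le_left hn)
  let word : ℕ → List σ := fun i => u ++ O.ones i ++ u' ++ O.ones (s - i) ++ v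
  have hmono : StrictMonoOn (O.moment ∘ word) (Set.Iio B) := by
    intro i _ j (hj : j < B) hij
    obtain ⟨k, rfl⟩ := Nat.exists_eq_add_of_lt hij
    have hk : s - i = k + 1 + (s - (i + k + 1)) := by omega
    simp only [word, Function.comp_apply, hk]
    exact moment_twoRuns_lt hc k.succ_pos u v i _
  rw [← Set.ncard_Iio_nat B]
  refine Set.ncard_le_ncard_of_injOn word (fun i (hi : i < B) => ⟨hL _ _, ?_⟩)
    (fun i hi j hj hij => hmono.injOn hi hj (congrArg O.moment hij)) (finite_level L n)
  simp only [word, weight_append, weight_ones]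
  omega

lemma BlockShape.twoRuns_or_sparse {𝒳 : Set (Set (List σ))} {R D : ℕ} {w : List σ}
    (h : O.BlockShape L 𝒳 R D w) : O.TwoRuns L ∨ w ∈ O.sparse D := by
  cases h with
  | @mixed X A u x v hX hu hA hb hx hR hpump =>
    obtain ⟨b, hbA, hb⟩ := hb
    refine Or.inl ⟨u, [b], v, ⟨b, by simp, hb⟩, fun i j => ?_⟩
    have hb : Over A [b] := fun c hc => List.mem_singleton.1 hc ▸ hbA
    simpa using hpump (O.ones i ++ [b] ++ O.ones j)
      (over_append.2 ⟨over_append.2 ⟨over_ones hA i, hb⟩, over_ones hA j⟩)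
  | twoOnes hX hu hX' hu' hc hk hk' hpump => exact Or.inl ⟨_, _, _, hc, hpump⟩
  | oneOnes hX hu hk hu' hv hpump => exact Or.inr ⟨_, _, _, rfl, hu', hv⟩
  | short hw => exact Or.inr ⟨w, 0, [], by simp, hw, Nat.zero_le _⟩

lemma tendsto_ncard_level [Finite σ] (hL : O.Downset L)
    (hunb : ¬ ∃ B, ∀ n, (O.level L n).ncard ≤ B) :
    Tendsto (fun n => (O.level L n).ncard) atTop atTop := by
  obtain ⟨𝒳, -, -, hshape⟩ := exists_blockShape hL
  obtain ⟨D, hD⟩ := hshape 0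
  refine TwoRuns.tendsto_ncard_level (by_contra fun hruns => hunb
    ⟨{w : List σ | w.length ≤ D}.ncard ^ 2, fun n => ?_⟩)
  refine (Set.ncard_le_ncard ?_ (finite_level _ n)).trans (O.ncard_level_sparse_le D n)
  exact fun w hw => ⟨(hD w hw.1).twoRuns_or_sparse.resolve_left hruns, hw.2⟩

end TwoRuns

section Collapse

variable {σ : Type*} {O : WordOrder σ} {L X : Set (List σ)} {A : Finset σ} {u x v V : List σ}
  {m N : ℕ}

lemma mem_switchable_of_over (hu : u ∈ X) (hA : O.one ∈ A) (hx : Over A x)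
    (hm : m * O.weight V ≤ x.length) (hV : ¬ V <:+: x)
    (h : ∀ x₁ x₂, Over A x₁ → Over A x₂ → u ++ x₁ ++ V ++ x₂ ++ v ∈ L) :
    u ++ x ++ v ∈ O.switchable L X V m := by
  refine ⟨u, hu, x, v, List.append_assoc .., hm, hV, ?_⟩
  rintro x₁ y x₂ rfl -
  obtain ⟨h₁, h₂⟩ := over_append.1 hx
  simpa using h x₁ (O.ones _ ++ x₂) h₁ (over_append.2 ⟨over_ones hA _, (over_append.1 h₂).2⟩)

lemma mem_switchable_singleton (hu : u ∈ X) (hA : O.one ∈ A) (hx : Over A x) {c : σ} (hc : c ∉ A)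
    (hm : m * O.size c ≤ x.length)
    (h : ∀ x₁ x₂, Over A x₁ → Over A x₂ → u ++ x₁ ++ [c] ++ x₂ ++ v ∈ L) :
    u ++ x ++ v ∈ O.switchable L X [c] m :=
  mem_switchable_of_over hu hA hx (by simpa using hm)
    (fun hcx => hc (hx c (hcx.subset (List.mem_singleton_self c)))) h

section Fintype

variable [Fintype σ]

variable (O) in
/-- The words that are put into long blocks of moment-minimal words; see `switchable`. -/
def markers (N : ℕ) : Set (List σ) :=
  Set.range (fun p : Finset σ × σ => O.reducibleWord N p.1 p.2) ∪ Set.range fun c => [c]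

lemma exists_switchable_of_mixed (hL : O.Downset L) (hN : O.PumpConstant L N) (hu : u ∈ X)
    (hA : O.one ∈ A) (hb : ∃ b ∈ A, b ≠ O.one) (hx : Over A x)
    (hm : ∀ V ∈ O.markers N, m * O.weight V ≤ x.length)
    (hpump : ∀ y, Over A y → u ++ y ++ v ∈ L) (hmin : u ++ x ++ v ∈ O.momentMinimal L) :
    ∃ V ∈ O.markers N, u ++ x ++ v ∈ O.switchable L X V m := by
  obtain ⟨b, hbA, hbmax⟩ := A.exists_max_image O.size ⟨_, hA⟩
  have hb1 : b ≠ O.one := by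
    obtain ⟨c, hcA, hc⟩ := hb
    rintro rfl
    exact (hbmax c hcA).not_gt (O.size_one.trans_lt (one_lt_size hc))
  have hred : O.reducibleWord N A b ∈ O.markers N := Or.inl ⟨(A, b), rfl⟩
  by_cases hV : O.reducibleWord N A b <:+: x
  · obtain ⟨s, t, rfl⟩ := hV
    obtain ⟨⟨hs, -⟩, ht⟩ := (over_append.1 hx).imp_left over_append.1
    have htight : ¬ Tight L N (u ++ s) A (t ++ v) := by
      refine not_tight_of_momentMinimal hL hN hA hbA hbmax hb1 (fun y hy => ?_)
        (by simpa using hmin)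
      simpa using hpump (s ++ y ++ t) (over_append.2 ⟨over_append.2 ⟨hs, hy⟩, ht⟩)
    obtain ⟨c, hc, hins⟩ := exists_notMem_of_not_tight hL hN htight
    have hcm : [c] ∈ O.markers N := Or.inr ⟨c, rfl⟩
    refine ⟨[c], hcm, mem_switchable_singleton hu hA hx hc (by simpa using hm _ hcm) ?_⟩
    intro x₁ x₂ h₁ h₂
    refine hL ?_ (hins x₁ x₂ h₁ h₂)
    simp only [List.append_assoc]
    refine O.append (O.refl u) (O.trans ?_ (le_append_right s _))
    exact O.append (O.refl x₁) (O.append (O.refl [c]) (O.append (O.refl x₂) (le_append_right t v)))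
  · refine ⟨_, hred, mem_switchable_of_over hu hA hx (hm _ hred) hV fun x₁ x₂ h₁ h₂ => ?_⟩
    simpa using hpump (x₁ ++ O.reducibleWord N A b ++ x₂)
      (over_append.2 ⟨over_append.2 ⟨h₁, over_reducibleWord hA hbA⟩, h₂⟩)

lemma exists_switchable_of_twoRuns (hL : O.Downset L) (hN : O.PumpConstant L N) {X' : Set (List σ)}
    {u' : List σ} {i k : ℕ} (hu : u ∈ X) (hu' : u ++ O.ones (i + 1) ++ u' ∈ X')
    (hc : ∃ c ∈ u', c ≠ O.one) (hi : 2 * (2 * N + O.maxSize) + 2 ≤ i)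
    (hk : 2 * (2 * N + O.maxSize) + 2 ≤ k) (hmi : ∀ V ∈ O.markers N, m * O.weight V ≤ i)
    (hmk : ∀ V ∈ O.markers N, m * O.weight V ≤ k)
    (hpump : ∀ i j, u ++ O.ones i ++ u' ++ O.ones j ++ v ∈ L)
    (hmin : u ++ O.ones (i + 1) ++ u' ++ O.ones k ++ v ∈ O.momentMinimal L) :
    ∃ V ∈ O.markers N, u ++ O.ones (i + 1) ++ u' ++ O.ones k ++ v ∈ O.switchable L X V m ∪
      O.switchable L X' V m := by
  have hcm : ∀ c : σ, [c] ∈ O.markers N := fun c => Or.inr ⟨c, rfl⟩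
  have hone : O.one ∈ ({O.one} : Finset σ) := Finset.mem_singleton_self _
  rcases not_tight_ones_of_momentMinimal hL hN hc hi hk hpump hmin with htight | htight
  · obtain ⟨c, hc, hins⟩ := exists_notMem_of_not_tight hL hN htight
    have := hmi _ (hcm c)
    simp only [weight_cons, weight_nil, add_zero] at this
    have := mem_switchable_singleton (m := m) hu hone (over_ones hone (i + 1)) hc
      (by simp only [length_ones]; omega) hins
    exact ⟨[c], hcm c, Or.inl (by simpa using this)⟩
  · obtain ⟨c, hc, hins⟩ := exists_notMem_of_not_tight hL hN htight
    refine ⟨[c], hcm c, Or.inr (mem_switchable_singleton hu' hone (over_ones hone k) hc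
      (by simpa using hmk _ (hcm c)) fun x₁ x₂ h₁ h₂ => ?_)⟩
    have hsweep : O.le (sweep {O.one} N) (O.ones i) :=
      sweep_singleton O i ▸ sweep_mono _ (by omega)
    have := hN {O.one} u (O.ones i) (O.ones 1) (u' ++ x₁ ++ [c] ++ x₂ ++ v) hsweep
      (over_ones hone i) (over_ones hone 1) (by simpa using hins x₁ x₂ h₁ h₂)
    simpa [O.ones_add i] using this

lemma BlockShape.exists_switchable_or_sparse (hL : O.Downset L) (hN : O.PumpConstant L N)
    {𝒳 : Set (Set (List σ))} {R D : ℕ} {w : List σ} (hR : 2 * (2 * N + O.maxSize) + 3 ≤ R)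
    (hm : ∀ V ∈ O.markers N, m * O.weight V < R) (hmin : w ∈ O.momentMinimal L)
    (h : O.BlockShape L 𝒳 R D w) :
    (∃ X ∈ 𝒳, ∃ V ∈ O.markers N, w ∈ O.switchable L X V m) ∨ w ∈ O.sparse D := by
  cases h with
  | @mixed X A u x v hX hu hA hb hx hRx hpump =>
    exact Or.inl ⟨X, hX, exists_switchable_of_mixed hL hN hu hA hb hx
      (fun V hV => (hm V hV).le.trans hRx) hpump hmin⟩
  | @twoOnes X X' u u' v k k' hX hu hX' hu' hc hk hk' hpump =>
    obtain ⟨i, rfl⟩ : ∃ i, k = i + 1 := ⟨k - 1, by omega⟩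
    obtain ⟨V, hV, hw | hw⟩ := exists_switchable_of_twoRuns hL hN hu hu' hc (by omega) (by omega)
      (fun V hV => Nat.le_of_lt_succ ((hm V hV).trans_le hk)) (fun V hV => (hm V hV).le.trans hk')
      hpump hmin
    · exact Or.inl ⟨X, hX, V, hV, hw⟩
    · exact Or.inl ⟨X', hX', V, hV, hw⟩
  | oneOnes hX hu hk hu' hv hpump => exact Or.inr ⟨_, _, _, rfl, hu', hv⟩
  | short hw => exact Or.inr ⟨w, 0, [], by simp, hw, Nat.zero_le _⟩

end Fintype

variable [Finite σ]

lemma exists_momentMinimal_subset (hL : O.Downset L) :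
    ∃ 𝒮 : Set (Set (List σ) × List σ), 𝒮.Finite ∧ (∀ p ∈ 𝒮, PrefixCode p.1) ∧ ∀ m, ∃ D,
      O.momentMinimal L ⊆ O.sparse D ∪ ⋃ p ∈ 𝒮, O.switchable L p.1 p.2 m := by
  have := Fintype.ofFinite σ
  obtain ⟨N, hN⟩ := hL.exists_pumpConstant
  obtain ⟨𝒳, hfin, hcode, hshape⟩ := exists_blockShape hL
  have hmarkers : (O.markers N).Finite := (Set.finite_range _).union (Set.finite_range _)
  obtain ⟨Q, hQ⟩ := (hmarkers.image O.weight).bddAbove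
  refine ⟨𝒳 ×ˢ O.markers N, hfin.prod hmarkers, fun p hp => hcode _ hp.1, fun m => ?_⟩
  obtain ⟨D, hD⟩ := hshape (m * Q + (2 * (2 * N + O.maxSize) + 3))
  have hm : ∀ V ∈ O.markers N, m * O.weight V < m * Q + (2 * (2 * N + O.maxSize) + 3) :=
    fun V hV => (Nat.mul_le_mul_left m (hQ ⟨V, hV, rfl⟩)).trans_lt (by omega)
  refine ⟨D, fun w hw => ?_⟩
  rcases (hD w hw.1).exists_switchable_or_sparse hL hN (Nat.le_add_left _ _) hm hw with
    ⟨X, hX, V, hV, hwS⟩ | hwS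
  · exact Or.inr (Set.mem_biUnion (show (X, V) ∈ 𝒳 ×ˢ O.markers N from ⟨hX, hV⟩) hwS)
  · exact Or.inl hwS

lemma exists_mul_ncard_level_momentMinimal_le (hL : O.Downset L) :
    ∃ C, ∀ m, ∃ B, ∀ n,
      m * (O.level (O.momentMinimal L) n).ncard ≤ C * (O.level L n).ncard + B := by
  obtain ⟨𝒮, hfin, hcode, hcover⟩ := exists_momentMinimal_subset hL
  lift 𝒮 to Finset (Set (List σ) × List σ) using hfin
  refine ⟨∑ p ∈ 𝒮, {y : List σ | y.length = O.weight p.2}.ncard, fun m => ?_⟩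
  obtain ⟨D, hD⟩ := hcover m
  refine ⟨m * {w : List σ | w.length ≤ D}.ncard ^ 2, fun n => ?_⟩
  have hlevel : O.level (O.momentMinimal L) n ⊆
      O.level (O.sparse D) n ∪ ⋃ p ∈ 𝒮, O.level (O.switchable L p.1 p.2 m) n := by
    rintro w ⟨hw, hn⟩
    rcases hD hw with hw | hw
    · exact Or.inl ⟨hw, hn⟩
    · obtain ⟨p, hp, hw⟩ := Set.mem_iUnion₂.1 hw
      exact Or.inr (Set.mem_biUnion hp ⟨hw, hn⟩)
  calc m * (O.level (O.momentMinimal L) n).ncard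
      ≤ m * ((O.level (O.sparse D) n).ncard +
          ∑ p ∈ 𝒮, (O.level (O.switchable L p.1 p.2 m) n).ncard) := by
        gcongr
        refine (Set.ncard_le_ncard hlevel ?_).trans ((Set.ncard_union_le _ _).trans ?_)
        · exact (finite_level _ n).union (𝒮.finite_toSet.biUnion fun _ _ => finite_level _ n)
        · gcongr
          exact 𝒮.set_ncard_biUnion_le _
    _ = ∑ p ∈ 𝒮, m * (O.level (O.switchable L p.1 p.2 m) n).ncard +
          m * (O.level (O.sparse D) n).ncard := by rw [mul_add, Finset.mul_sum, add_comm]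
    _ ≤ ∑ p ∈ 𝒮, {y : List σ | y.length = O.weight p.2}.ncard * (O.level L n).ncard +
          m * {w : List σ | w.length ≤ D}.ncard ^ 2 := add_le_add
          (Finset.sum_le_sum fun p hp => mul_ncard_level_switchable_le (hcode p hp) m n)
          (Nat.mul_le_mul_left m (O.ncard_level_sparse_le D n))
    _ = _ := by rw [Finset.sum_mul]

theorem isLittleO_ncard_level_momentMinimal (hL : O.Downset L)
    (hunb : ¬ ∃ B, ∀ n, (O.level L n).ncard ≤ B) :
    (fun n => ((O.level (O.momentMinimal L) n).ncard : ℝ)) =o[atTop]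
      fun n => ((O.level L n).ncard : ℝ) := by
  obtain ⟨C, hC⟩ := exists_mul_ncard_level_momentMinimal_le hL
  exact isLittleO_of_forall_mul_le hC (tendsto_ncard_level hL hunb)

end Collapse

end WordOrder

namespace PPerm

/-! ### Permutations as words of sum-indecomposables -/

section Entry

/-- The entries of a permutation as a function on `ℕ`. Outside the positions of `π` it is the
identity, so that `entry_psum_add` holds for all positions. -/
def entry (π : PPerm) (i : ℕ) : ℕ := if h : i < π.1 then π.2 ⟨i, h⟩ else i

lemma entry_of_lt {π : PPerm} {i : ℕ} (h : i < π.1) : entry π i = π.2 ⟨i, h⟩ := dif_pos h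

lemma entry_lt {π : PPerm} {i : ℕ} (h : i < π.1) : entry π i < π.1 :=
  entry_of_lt h ▸ (π.2 ⟨i, h⟩).2

lemma entry_injOn (π : PPerm) : Set.InjOn (entry π) (Set.Iio π.1) := by
  intro i (hi : i < π.1) j (hj : j < π.1) h
  rw [entry_of_lt hi, entry_of_lt hj] at h
  exact congrArg Fin.val (π.2.injective (Fin.ext h))

lemma ext_entry {π τ : PPerm} (h : π.1 = τ.1) (h' : ∀ i < π.1, entry π i = entry τ i) : π = τ := by
  obtain ⟨n, π⟩ := π
  obtain ⟨m, τ⟩ := τ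
  obtain rfl : n = m := h
  refine congrArg (Sigma.mk n) (Equiv.ext fun i => Fin.ext ?_)
  simpa only [entry_of_lt (π := ⟨n, π⟩) i.2, entry_of_lt (π := ⟨n, τ⟩) i.2] using h' i i.2

lemma exists_entry_eq {n : ℕ} {f : ℕ → ℕ} (hf : ∀ i < n, f i < n) (hinj : Set.InjOn f (Set.Iio n)) :
    ∃ π : PPerm, π.1 = n ∧ ∀ i < n, entry π i = f i := by
  let g : Fin n → Fin n := fun i => ⟨f i, hf i i.2⟩
  have hg : Function.Injective g := fun i j hij =>
    Fin.ext (hinj i.2 j.2 (congrArg Fin.val hij))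
  refine ⟨⟨n, Equiv.ofBijective g (Finite.injective_iff_bijective.1 hg)⟩, rfl, fun i hi => ?_⟩
  exact entry_of_lt (π := ⟨n, _⟩) hi

lemma finite_setOf_size_eq (n : ℕ) : {π : PPerm | π.1 = n}.Finite := by
  refine (Set.finite_range fun p : Equiv.Perm (Fin n) => (⟨n, p⟩ : PPerm)).subset ?_
  rintro ⟨_, p⟩ rfl
  exact ⟨p, rfl⟩

end Entry

section Sum

variable {α β : PPerm}

lemma size_psum (α β : PPerm) : (psum α β).1 = α.1 + β.1 := rfl

lemma entry_psum_of_lt {i : ℕ} (h : i < α.1) : entry (psum α β) i = entry α i := by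
  rw [entry_of_lt (π := psum α β) (Nat.lt_add_right _ h), entry_of_lt h]
  change ((finSumFinEquiv (Sum.map α.2 β.2 (finSumFinEquiv.symm (Fin.castAdd β.1 ⟨i, h⟩))) :
    Fin _) : ℕ) = _
  simp only [finSumFinEquiv_symm_apply_castAdd, Sum.map_inl, finSumFinEquiv_apply_left,
    Fin.val_castAdd]

lemma entry_psum_add (i : ℕ) : entry (psum α β) (α.1 + i) = α.1 + entry β i := by
  by_cases h : i < β.1
  · rw [entry_of_lt (π := psum α β) (Nat.add_lt_add_left h _), entry_of_lt h]
    change ((finSumFinEquiv (Sum.map α.2 β.2 (finSumFinEquiv.symm (Fin.natAdd α.1 ⟨i, h⟩))) :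
      Fin _) : ℕ) = _
    simp only [finSumFinEquiv_symm_apply_natAdd, Sum.map_inr, finSumFinEquiv_apply_right,
      Fin.val_natAdd]
  · rw [entry, entry, dif_neg h, dif_neg (by rw [size_psum]; omega)]

lemma eq_of_psum_eq_psum {α' β' : PPerm} (hs : α.1 = α'.1) (h : psum α β = psum α' β') :
    α = α' ∧ β = β' := by
  have hsize : α.1 + β.1 = α'.1 + β'.1 := congrArg Sigma.fst h
  have hentry : ∀ i, entry (psum α β) i = entry (psum α' β') i := fun i => by rw [h]
  constructor
  · refine ext_entry hs fun i hi => ?_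
    simpa only [entry_psum_of_lt hi, entry_psum_of_lt (hs ▸ hi)] using hentry i
  · refine ext_entry (by omega) fun i _ => ?_
    have := hentry (α.1 + i)
    rw [entry_psum_add, hs, entry_psum_add] at this
    exact Nat.add_left_cancel this

lemma entry_ge_of_forall_lt {π : PPerm} {k i : ℕ} (hk : k ≤ π.1) (h : ∀ i < k, entry π i < k)
    (hki : k ≤ i) (hi : i < π.1) : k ≤ entry π i := by
  by_contra! hlt
  have hsurj := Finset.surjOn_of_injOn_of_card_le (s := Finset.range k) (t := Finset.range k)
    (entry π) (by simpa [Set.MapsTo] using h)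
    ((entry_injOn π).mono (by simpa using Set.Iio_subset_Iio hk)) le_rfl
  obtain ⟨j, hj, hji⟩ := hsurj (by simpa using hlt)
  have hjk : j < k := by simpa using hj
  exact absurd (entry_injOn π (hjk.trans_le hk) hi hji) (hjk.trans_le hki).ne

lemma exists_eq_psum {π : PPerm} {k : ℕ} (hk : k ≤ π.1) (h : ∀ i < k, entry π i < k) :
    ∃ α β : PPerm, π = psum α β ∧ α.1 = k := by
  have hge : ∀ i, i < π.1 - k → k ≤ entry π (k + i) := fun i hi =>
    entry_ge_of_forall_lt hk h (by omega) (by omega)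
  have hlt : ∀ i, i < π.1 - k → entry π (k + i) < π.1 := fun i hi => entry_lt (by omega)
  obtain ⟨α, rfl, hα⟩ := exists_entry_eq h ((entry_injOn π).mono (Set.Iio_subset_Iio hk))
  obtain ⟨β, hsβ, hβ⟩ := exists_entry_eq (n := π.1 - α.1) (f := fun i => entry π (α.1 + i) - α.1)
    (fun i hi => by have := hlt i hi; omega) fun i (hi : i < _) j (hj : j < _) hij => by
      have hi' := hge i hi
      have hj' := hge j hj
      dsimp only at hij
      have hmem : ∀ l < π.1 - α.1, α.1 + l ∈ Set.Iio π.1 := fun l hl => Nat.add_lt_of_lt_sub' hl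
      exact Nat.add_left_cancel (entry_injOn π (hmem i hi) (hmem j hj) (by omega))
  refine ⟨α, β, ext_entry (by rw [size_psum]; omega) fun i hi => ?_, rfl⟩
  rcases Nat.lt_or_ge i α.1 with hiα | hiα
  · rw [entry_psum_of_lt hiα, hα i hiα]
  · obtain ⟨i, rfl⟩ := Nat.exists_eq_add_of_le hiα
    have := hge i (by omega)
    rw [entry_psum_add, hβ i (by omega)]
    omega

end Sum

section Containment

variable {π τ ρ : PPerm}

lemma patternLE_refl (π : PPerm) : PatternLE π π := ⟨id, strictMono_id, fun _ _ => Iff.rfl⟩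

lemma patternLE_trans : PatternLE π τ → PatternLE τ ρ → PatternLE π ρ := by
  rintro ⟨g, hg, h⟩ ⟨g', hg', h'⟩
  exact ⟨g' ∘ g, hg'.comp hg, fun i j => (h i j).trans (h' _ _)⟩

lemma size_le_of_patternLE : PatternLE π τ → π.1 ≤ τ.1 := by
  rintro ⟨g, hg, -⟩
  simpa using Fintype.card_le_of_injective g hg.injective

lemma eq_of_patternLE_of_size_eq (h : PatternLE π τ) (hs : π.1 = τ.1) : π = τ := by
  obtain ⟨n, π⟩ := π
  obtain ⟨m, τ⟩ := τ
  obtain rfl : n = m := hs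
  have eq_id : ∀ f : Fin n → Fin n, StrictMono f → f = id := fun f hf =>
    (hf.range_inj strictMono_id).1 <| by
      rw [(Finite.surjective_of_injective hf.injective).range_eq, Set.range_id]
  obtain ⟨g, hg, h⟩ := h
  obtain rfl := eq_id g hg
  have hmono : StrictMono (τ ∘ π.symm) := fun i j hij =>
    (h (π.symm i) (π.symm j)).1 (by simpa using hij)
  refine congrArg (Sigma.mk n) (Equiv.ext fun i => ?_)
  simpa using (congrFun (eq_id _ hmono) (π i)).symm

/-- The sequence `g` lists the positions of an occurrence of `π` in `τ`. -/
structure Occurrence (π τ : PPerm) (g : ℕ → ℕ) : Prop where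
  strictMonoOn : StrictMonoOn g (Set.Iio π.1)
  lt_size : ∀ i < π.1, g i < τ.1
  lt_iff : ∀ i < π.1, ∀ j < π.1, entry π i < entry π j ↔ entry τ (g i) < entry τ (g j)

lemma patternLE_iff_exists_occurrence : PatternLE π τ ↔ ∃ g, Occurrence π τ g := by
  constructor
  · rintro ⟨g, hg, h⟩
    refine ⟨fun i => if h : i < π.1 then g ⟨i, h⟩ else 0,
      fun i (hi : i < _) j (hj : j < _) hij => ?_, fun i hi => ?_, fun i hi j hj => ?_⟩
    · simpa only [hi, hj, dif_pos, Fin.val_fin_lt]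
        using hg (show (⟨i, hi⟩ : Fin π.1) < ⟨j, hj⟩ from hij)
    · simpa only [hi, dif_pos] using (g ⟨i, hi⟩).2
    · simpa only [hi, hj, dif_pos, entry_of_lt, Fin.is_lt, Fin.eta, Fin.val_fin_lt]
        using h ⟨i, hi⟩ ⟨j, hj⟩
  · rintro ⟨g, hg, hτ, h⟩
    refine ⟨fun i => ⟨g i, hτ i i.2⟩, fun i j hij => hg i.2 j.2 hij, fun i j => ?_⟩
    simpa only [entry_of_lt (hτ i i.2), entry_of_lt (hτ j j.2), entry_of_lt i.2, entry_of_lt j.2,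
      Fin.eta, Fin.val_fin_lt] using h i i.2 j j.2

end Containment

section ContainmentSum

variable {π α α' β β' : PPerm} {g g' : ℕ → ℕ}

lemma entry_psum_lt_entry_psum {i j : ℕ} (hi : i < α.1) (hj : α.1 ≤ j) :
    entry (psum α β) i < entry (psum α β) j := by
  obtain ⟨j, rfl⟩ := Nat.exists_eq_add_of_le hj
  rw [entry_psum_of_lt hi, entry_psum_add]
  exact Nat.lt_add_right _ (entry_lt hi)

lemma occurrence_psum (h : Occurrence α α' g) (h' : Occurrence β β' g') :
    Occurrence (psum α β) (psum α' β')
      fun i => if i < α.1 then g i else α'.1 + g' (i - α.1) := by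
  set f : ℕ → ℕ := fun i => if i < α.1 then g i else α'.1 + g' (i - α.1)
  have hleft : ∀ i < α.1, f i = g i := fun i hi => if_pos hi
  have hright : ∀ i, f (α.1 + i) = α'.1 + g' i := fun i => by simp [f]
  have hg := h.lt_size
  have hcases : ∀ i < α.1 + β.1, i < α.1 ∨ ∃ k < β.1, i = α.1 + k := fun i hi =>
    (Nat.lt_or_ge i α.1).imp_right fun hi' => ⟨i - α.1, by omega, by omega⟩
  refine ⟨fun i hi j hj hij => ?_, fun i hi => ?_, fun i hi j hj => ?_⟩
  · rcases hcases i hi with hi' | ⟨k, hk, rfl⟩ <;> rcases hcases j hj with hj' | ⟨l, hl, rfl⟩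
    · simpa only [hleft _ hi', hleft _ hj'] using h.strictMonoOn hi' hj' hij
    · simpa only [hleft _ hi', hright] using Nat.lt_add_right _ (hg i hi')
    · omega
    · simpa only [hright, Nat.add_lt_add_iff_left]
        using h'.strictMonoOn hk hl (Nat.lt_of_add_lt_add_left hij)
  · rcases hcases i hi with hi' | ⟨k, hk, rfl⟩
    · simpa only [hleft _ hi', size_psum] using Nat.lt_add_right _ (hg i hi')
    · simpa only [hright, size_psum] using Nat.add_lt_add_left (h'.lt_size k hk) _
  · rcases hcases i hi with hi' | ⟨k, hk, rfl⟩ <;> rcases hcases j hj with hj' | ⟨l, hl, rfl⟩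
    · simpa only [hleft _ hi', hleft _ hj', entry_psum_of_lt, hi', hj', hg]
        using h.lt_iff i hi' j hj'
    · rw [hleft _ hi', hright]
      exact iff_of_true (entry_psum_lt_entry_psum hi' (Nat.le_add_right _ _))
        (entry_psum_lt_entry_psum (hg i hi') (Nat.le_add_right _ _))
    · rw [hleft _ hj', hright]
      exact iff_of_false (entry_psum_lt_entry_psum hj' (Nat.le_add_right _ _)).not_gt
        (entry_psum_lt_entry_psum (hg j hj') (Nat.le_add_right _ _)).not_gt
    · simpa only [hright, entry_psum_add, Nat.add_lt_add_iff_left] using h'.lt_iff k hk l hl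

lemma patternLE_psum (h : PatternLE α α') (h' : PatternLE β β') :
    PatternLE (psum α β) (psum α' β') := by
  obtain ⟨g, hg⟩ := patternLE_iff_exists_occurrence.1 h
  obtain ⟨g', hg'⟩ := patternLE_iff_exists_occurrence.1 h'
  exact patternLE_iff_exists_occurrence.2 ⟨_, occurrence_psum hg hg'⟩

lemma exists_le_forall_lt_iff_of_strictMonoOn {n : ℕ} (hg : StrictMonoOn g (Set.Iio n)) (m : ℕ) :
    ∃ k ≤ n, ∀ i < n, i < k ↔ g i < m := by
  have hex : ∃ k, k = n ∨ m ≤ g k := ⟨n, Or.inl rfl⟩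
  classical
  refine ⟨Nat.find hex, Nat.find_min' hex (Or.inl rfl), fun i hi => ⟨fun hik => ?_, fun hgi => ?_⟩⟩
  · exact not_le.1 fun hle => Nat.find_min hex hik (Or.inr hle)
  · by_contra! hki
    have hm : m ≤ g (Nat.find hex) :=
      (Nat.find_spec hex).resolve_left (hki.trans_lt hi).ne
    exact absurd (hm.trans (hg.monotoneOn (hki.trans_lt hi) hi hki)) (not_le.2 hgi)

lemma exists_eq_psum_of_forall_entry_lt {k : ℕ} (hk : k ≤ π.1)
    (h : ∀ i < k, ∀ j, k ≤ j → j < π.1 → entry π i < entry π j) :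
    ∃ π₁ π₂ : PPerm, π = psum π₁ π₂ ∧ π₁.1 = k := by
  refine exists_eq_psum hk fun i hi => ?_
  have hmaps : Set.MapsTo (entry π) (Finset.Ico k π.1) (Finset.Ioo (entry π i) π.1) := by
    intro j hj
    simp only [Finset.coe_Ico, Finset.coe_Ioo, Set.mem_Ico, Set.mem_Ioo] at hj ⊢
    exact ⟨h i hi j hj.1 hj.2, entry_lt hj.2⟩
  have hcard := Finset.card_le_card_of_injOn _ hmaps
    ((entry_injOn π).mono fun j hj => (Finset.mem_Ico.1 hj).2)
  rw [Nat.card_Ico, Nat.card_Ioo] at hcard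
  have := entry_lt (hi.trans_le hk)
  omega

lemma occurrence_left (h : Occurrence (psum α β) (psum α' β') g) (hg : ∀ i < α.1, g i < α'.1) :
    Occurrence α α' g where
  strictMonoOn := h.strictMonoOn.mono (Set.Iio_subset_Iio (Nat.le_add_right _ _))
  lt_size := hg
  lt_iff i hi j hj := by
    simpa only [entry_psum_of_lt, hi, hj, hg]
      using h.lt_iff i (Nat.lt_add_right _ hi) j (Nat.lt_add_right _ hj)

lemma occurrence_right (h : Occurrence (psum α β) (psum α' β') g)
    (hg : ∀ i < β.1, α'.1 ≤ g (α.1 + i)) : Occurrence β β' fun i => g (α.1 + i) - α'.1 := by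
  have hmem : ∀ i < β.1, α.1 + i < α.1 + β.1 := fun i hi => Nat.add_lt_add_left hi _
  refine ⟨fun i hi j hj hij => ?_, fun i hi => ?_, fun i hi j hj => ?_⟩
  · exact Nat.sub_lt_sub_right (hg i hi)
      (h.strictMonoOn (hmem i hi) (hmem j hj) (Nat.add_lt_add_left hij _))
  · exact Nat.sub_lt_left_of_lt_add (hg i hi) (h.lt_size _ (hmem i hi))
  · obtain ⟨k, hk⟩ := Nat.exists_eq_add_of_le (hg i hi)
    obtain ⟨l, hl⟩ := Nat.exists_eq_add_of_le (hg j hj)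
    simpa only [hk, hl, entry_psum_add, Nat.add_lt_add_iff_left, Nat.add_sub_cancel_left]
      using h.lt_iff _ (hmem i hi) _ (hmem j hj)

lemma exists_psum_of_patternLE_psum (h : PatternLE π (psum α β)) :
    ∃ π₁ π₂, π = psum π₁ π₂ ∧ PatternLE π₁ α ∧ PatternLE π₂ β := by
  obtain ⟨g, hg⟩ := patternLE_iff_exists_occurrence.1 h
  obtain ⟨k, hkn, hk⟩ := exists_le_forall_lt_iff_of_strictMonoOn hg.strictMonoOn α.1
  have hge : ∀ j, k ≤ j → j < π.1 → α.1 ≤ g j := fun j hkj hj =>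
    not_lt.1 fun hlt => hkj.not_gt ((hk j hj).2 hlt)
  obtain ⟨π₁, π₂, rfl, rfl⟩ := exists_eq_psum_of_forall_entry_lt hkn fun i hi j hkj hj =>
    have hin := hi.trans_le hkn
    (hg.lt_iff i hin j hj).2 (entry_psum_lt_entry_psum ((hk i hin).1 hi) (hge j hkj hj))
  refine ⟨π₁, π₂, rfl, patternLE_iff_exists_occurrence.2 ⟨_, occurrence_left hg fun i hi => ?_⟩,
    patternLE_iff_exists_occurrence.2 ⟨_, occurrence_right hg fun i hi => ?_⟩⟩
  · exact (hk i (Nat.lt_add_right _ hi)).1 hi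
  · exact hge _ (Nat.le_add_right _ _) (Nat.add_lt_add_left hi _)

end ContainmentSum

section SumDecomposition

variable {α β : PPerm}

/-- The empty permutation, the neutral element of `psum`. -/
def empty : PPerm := ⟨0, 1⟩

lemma eq_empty_of_size_eq_zero (h : α.1 = 0) : α = empty := ext_entry h (by omega)

lemma psum_empty (α : PPerm) : psum α empty = α :=
  ext_entry rfl fun _ hi => entry_psum_of_lt hi

lemma empty_psum (α : PPerm) : psum empty α = α :=
  ext_entry (Nat.zero_add _) fun i _ => by
    simpa only [empty, Nat.zero_add] using entry_psum_add (α := empty) (β := α) i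

lemma psum_assoc (α β γ : PPerm) : psum (psum α β) γ = psum α (psum β γ) := by
  refine ext_entry (Nat.add_assoc _ _ _) fun i _ => ?_
  rcases Nat.lt_or_ge i α.1 with hi | hi
  · rw [entry_psum_of_lt (Nat.lt_add_right _ hi), entry_psum_of_lt hi, entry_psum_of_lt hi]
  obtain ⟨i, rfl⟩ := Nat.exists_eq_add_of_le hi
  rw [entry_psum_add]
  rcases Nat.lt_or_ge i β.1 with hi' | hi'
  · rw [entry_psum_of_lt (Nat.add_lt_add_left hi' _), entry_psum_add, entry_psum_of_lt hi']
  obtain ⟨i, rfl⟩ := Nat.exists_eq_add_of_le hi'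
  rw [entry_psum_add, ← Nat.add_assoc, ← Nat.add_assoc]
  exact entry_psum_add i

/-- The iterated direct sum of a list of permutations. -/
def psumList (l : List PPerm) : PPerm := l.foldr psum empty

lemma psumList_cons (α : PPerm) (l : List PPerm) : psumList (α :: l) = psum α (psumList l) := rfl

lemma psumList_singleton (α : PPerm) : psumList [α] = α := psum_empty α

lemma psumList_append (u v : List PPerm) :
    psumList (u ++ v) = psum (psumList u) (psumList v) := by
  induction u with
  | nil => exact (empty_psum _).symm
  | cons α u ih => rw [List.cons_append, psumList_cons, psumList_cons, ih, psum_assoc]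

lemma size_psumList (l : List PPerm) : (psumList l).1 = (l.map Sigma.fst).sum := by
  induction l with
  | nil => rfl
  | cons α l ih => rw [psumList_cons, size_psum, ih, List.map_cons, List.sum_cons]

lemma exists_psumList_eq (π : PPerm) : ∃ l, (∀ α ∈ l, SumIndec α) ∧ psumList l = π := by
  induction hn : π.1 using Nat.strong_induction_on generalizing π with
  | _ n ih =>
    rcases Nat.eq_zero_or_pos π.1 with h0 | h0
    · exact ⟨[], by simp, (eq_empty_of_size_eq_zero h0).symm⟩
    by_cases hπ : SumIndec π
    · exact ⟨[π], by simpa using hπ, psumList_singleton π⟩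
    · obtain ⟨α, β, hα, hβ, rfl⟩ := not_not.1 (not_and.1 hπ h0)
      rw [size_psum] at hn
      obtain ⟨u, hu, rfl⟩ := ih α.1 (by omega) α rfl
      obtain ⟨v, hv, rfl⟩ := ih β.1 (by omega) β rfl
      exact ⟨u ++ v, fun γ hγ => (List.mem_append.1 hγ).elim (hu γ) (hv γ), psumList_append u v⟩

lemma size_le_of_psum_eq_psum {α' β' : PPerm} (hα : 0 < α.1) (hα' : SumIndec α')
    (h : psum α β = psum α' β') : α'.1 ≤ α.1 := by
  by_contra! hlt
  have hmaps : ∀ i < α.1, entry α' i < α.1 := fun i hi => by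
    rw [← entry_psum_of_lt (hi.trans hlt) (β := β'), ← h, entry_psum_of_lt hi]
    exact entry_lt hi
  obtain ⟨γ, δ, rfl, hγ⟩ := exists_eq_psum hlt.le hmaps
  rw [size_psum] at hlt
  exact hα'.2 ⟨γ, δ, hγ ▸ hα, by omega, rfl⟩

lemma psumList_ne_empty {l : List PPerm} (hα : SumIndec α) : psumList (α :: l) ≠ psumList [] :=
  fun h => (Nat.add_pos_left hα.1 (psumList l).1).ne' (congrArg Sigma.fst h)

lemma eq_of_psumList_eq {u v : List PPerm} (hu : ∀ α ∈ u, SumIndec α) (hv : ∀ α ∈ v, SumIndec α)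
    (h : psumList u = psumList v) : u = v := by
  induction u generalizing v with
  | nil =>
    cases v with
    | nil => rfl
    | cons β v => exact absurd h.symm (psumList_ne_empty (List.forall_mem_cons.1 hv).1)
  | cons α u ih =>
    obtain ⟨hα, hu'⟩ := List.forall_mem_cons.1 hu
    cases v with
    | nil => exact absurd h (psumList_ne_empty hα)
    | cons β v =>
      obtain ⟨hβ, hv'⟩ := List.forall_mem_cons.1 hv
      rw [psumList_cons, psumList_cons] at h
      have hsize : α.1 = β.1 := le_antisymm (size_le_of_psum_eq_psum hβ.1 hα h.symm)
        (size_le_of_psum_eq_psum hα.1 hβ h)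
      obtain ⟨rfl, huv⟩ := eq_of_psum_eq_psum hsize h
      rw [ih hu' hv' huv]

lemma empty_patternLE (π : PPerm) : PatternLE empty π :=
  ⟨fun i => i.elim0, fun i => i.elim0, fun i => i.elim0⟩

lemma patternLE_psumList_of_mem {l : List PPerm} (h : α ∈ l) : PatternLE α (psumList l) := by
  obtain ⟨u, v, rfl⟩ := List.append_of_mem h
  have hα : PatternLE α (psum α (psumList v)) := by
    simpa only [psum_empty] using patternLE_psum (patternLE_refl α) (empty_patternLE (psumList v))
  rw [psumList_append, psumList_cons]
  simpa only [empty_psum] using patternLE_psum (empty_patternLE (psumList u)) hα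

/-- The permutation of size one. -/
def point : PPerm := ⟨1, 1⟩

lemma point_patternLE {π : PPerm} (h : 0 < π.1) : PatternLE point π :=
  ⟨fun _ => ⟨0, h⟩, fun i j hij => absurd (Subsingleton.elim (α := Fin 1) i j) hij.ne,
    fun i j => by simp [Subsingleton.elim (α := Fin 1) i j]⟩

lemma sumIndec_point : SumIndec point := by
  refine ⟨Nat.one_pos, ?_⟩
  rintro ⟨α, β, hα, hβ, h⟩
  have : 1 = α.1 + β.1 := congrArg Sigma.fst h
  omega

end SumDecomposition

/-- The sum-indecomposable members of `C`: the letters that spell the members of `C`. -/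
abbrev Letter (C : Set PPerm) : Type := {π : PPerm // π ∈ C ∧ SumIndec π}

section Words

variable {C : Set PPerm}

/-- The permutation spelled by a word. -/
def wordSum (w : List (Letter C)) : PPerm := psumList (w.map Subtype.val)

lemma sumIndec_of_mem_map_val {w : List (Letter C)} : ∀ α ∈ w.map Subtype.val, SumIndec α :=
  List.forall_mem_map.2 fun a _ => a.2.2

lemma wordSum_singleton (a : Letter C) : wordSum [a] = a.1 := psumList_singleton a.1

lemma wordSum_append (u v : List (Letter C)) :
    wordSum (u ++ v) = psum (wordSum u) (wordSum v) := by
  rw [wordSum, List.map_append, psumList_append, wordSum, wordSum]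

lemma wordSum_injective : Function.Injective (wordSum (C := C)) := fun _ _ h =>
  List.map_injective_iff.2 Subtype.val_injective
    (eq_of_psumList_eq sumIndec_of_mem_map_val sumIndec_of_mem_map_val h)

lemma size_wordSum (w : List (Letter C)) : (wordSum w).1 = (w.map fun a => a.1.1).sum := by
  rw [wordSum, size_psumList, List.map_map]
  rfl

lemma exists_wordSum_eq (hC : IsPermClass C) {π : PPerm} (hπ : π ∈ C) :
    ∃ w : List (Letter C), wordSum w = π := by
  obtain ⟨l, hl, rfl⟩ := exists_psumList_eq π
  lift l to List (Letter C) using fun α hα =>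
    ⟨hC _ _ (patternLE_psumList_of_mem hα) hπ, hl α hα⟩
  exact ⟨l, rfl⟩

lemma exists_append_of_wordSum_patternLE {w u v : List (Letter C)}
    (h : PatternLE (wordSum w) (wordSum (u ++ v))) :
    ∃ w₁ w₂, w = w₁ ++ w₂ ∧ PatternLE (wordSum w₁) (wordSum u) ∧
      PatternLE (wordSum w₂) (wordSum v) := by
  rw [wordSum_append] at h
  obtain ⟨π₁, π₂, hw, h₁, h₂⟩ := exists_psum_of_patternLE_psum h
  obtain ⟨l₁, hl₁, rfl⟩ := exists_psumList_eq π₁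
  obtain ⟨l₂, hl₂, rfl⟩ := exists_psumList_eq π₂
  have hmap : w.map Subtype.val = l₁ ++ l₂ :=
    eq_of_psumList_eq sumIndec_of_mem_map_val (List.forall_mem_append.2 ⟨hl₁, hl₂⟩)
      (hw.trans (psumList_append l₁ l₂).symm)
  obtain ⟨w₁, w₂, rfl, rfl, rfl⟩ := List.map_eq_append_iff.1 hmap
  exact ⟨w₁, w₂, rfl, h₁, h₂⟩

/-- Containment of the spelled permutations, as an order on words. -/
def wordOrder (hpoint : point ∈ C) : WordOrder (Letter C) where
  size a := a.1.1
  le w v := PatternLE (wordSum w) (wordSum v)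
  one := ⟨point, hpoint, sumIndec_point⟩
  size_pos a := a.2.2.1
  size_one := rfl
  refl w := patternLE_refl _
  trans := patternLE_trans
  nil_le w := empty_patternLE _
  append h h' := by
    rw [wordSum_append, wordSum_append]
    exact patternLE_psum h h'
  split := exists_append_of_wordSum_patternLE
  sum_le h := by
    rw [← size_wordSum, ← size_wordSum]
    exact size_le_of_patternLE h
  eq_of_sum_eq h h' := by
    rw [← size_wordSum, ← size_wordSum] at h'
    exact wordSum_injective (eq_of_patternLE_of_size_eq h h')
  one_le a := by
    rw [wordSum_singleton, wordSum_singleton]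
    exact point_patternLE a.2.2.1

lemma weight_wordOrder (hpoint : point ∈ C) (w : List (Letter C)) :
    (wordOrder hpoint).weight w = (wordSum w).1 := (size_wordSum w).symm

/-- The words that spell the members of `C`. -/
def words (C : Set PPerm) : Set (List (Letter C)) := {w | wordSum w ∈ C}

lemma downset_words (hC : IsPermClass C) (hpoint : point ∈ C) :
    (wordOrder hpoint).Downset (words C) := fun _ _ h hv => hC _ _ h hv

lemma ncard_size_eq_ncard_level (hC : IsPermClass C) (hpoint : point ∈ C) {P : Set PPerm}
    (hP : P ⊆ C) (n : ℕ) :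
    {τ ∈ P | τ.1 = n}.ncard = ((wordOrder hpoint).level (wordSum ⁻¹' P) n).ncard := by
  rw [← Set.ncard_image_of_injective _ wordSum_injective]
  congr 1
  ext τ
  constructor
  · rintro ⟨hτ, hn⟩
    obtain ⟨w, rfl⟩ := exists_wordSum_eq hC (hP hτ)
    exact ⟨w, ⟨hτ, (weight_wordOrder hpoint w).trans hn⟩, rfl⟩
  · rintro ⟨w, ⟨hw, hn⟩, rfl⟩
    exact ⟨hw, (weight_wordOrder hpoint w).symm.trans hn⟩

lemma cnt_eq_ncard_level (hC : IsPermClass C) (hpoint : point ∈ C) (n : ℕ) :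
    cnt C n = ((wordOrder hpoint).level (words C) n).ncard :=
  ncard_size_eq_ncard_level hC hpoint subset_rfl n

lemma cnt_eq_avcnt_add (C : Set PPerm) (α : PPerm) (n : ℕ) :
    cnt C n = avcnt C α n + {τ ∈ {τ ∈ C | PatternLE α τ} | τ.1 = n}.ncard := by
  have hfin (P : PPerm → Prop) : {τ : PPerm | τ ∈ C ∧ τ.1 = n ∧ P τ}.Finite :=
    (finite_setOf_size_eq n).subset fun _ h => h.2.1
  have hset : {τ ∈ {τ ∈ C | PatternLE α τ} | τ.1 = n} = {τ | τ ∈ C ∧ τ.1 = n ∧ PatternLE α τ} := by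
    ext τ
    simp only [Set.mem_ofPred_eq]
    tauto
  rw [cnt, avcnt, hset, ← Set.ncard_union_eq _ (hfin _) (hfin _)]
  · congr 1
    ext τ
    simp only [Set.mem_ofPred_eq, Set.mem_union]
    tauto
  · exact Set.disjoint_left.2 fun _ h h' => h.2.2 h'.2.2

lemma wilfEq_of_wilfEquiv (hC : IsPermClass C) (hpoint : point ∈ C) {w w' : List (Letter C)}
    (h : (wordOrder hpoint).WilfEquiv (words C) w w') : WilfEq C (wordSum w) (wordSum w') := by
  have hcontain (v : List (Letter C)) (n : ℕ) :
      {τ ∈ {τ ∈ C | PatternLE (wordSum v) τ} | τ.1 = n}.ncard =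
        ((wordOrder hpoint).level ((wordOrder hpoint).above (words C) v) n).ncard :=
    ncard_size_eq_ncard_level hC hpoint (Set.sep_subset _ _) n
  intro n
  have hw := cnt_eq_avcnt_add C (wordSum w) n
  have hw' := cnt_eq_avcnt_add C (wordSum w') n
  rw [hcontain] at hw hw'
  have := h n
  omega

lemma wilfcnt_le_ncard_level [Finite (Letter C)] (hC : IsPermClass C) (hpoint : point ∈ C)
    (n : ℕ) :
    wilfcnt C n ≤
      ((wordOrder hpoint).level ((wordOrder hpoint).momentMinimal (words C)) n).ncard := by
  have hfin := WordOrder.finite_level (O := wordOrder hpoint)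
    ((wordOrder hpoint).momentMinimal (words C)) n
  refine (Set.ncard_le_ncard ?_ (hfin.image fun w =>
    {β | β ∈ C ∧ β.1 = n ∧ WilfEq C (wordSum w) β})).trans (Set.ncard_image_le hfin)
  rintro _ ⟨α, hα, hn, rfl⟩
  obtain ⟨w, rfl⟩ := exists_wordSum_eq hC hα
  obtain ⟨w', hw', hweight, hequiv⟩ :=
    WordOrder.exists_momentMinimal (O := wordOrder hpoint) (L := words C) hα
  have hwilf := wilfEq_of_wilfEquiv hC hpoint hequiv
  refine ⟨w', ⟨hw', hweight.trans ((weight_wordOrder hpoint w).trans hn)⟩, ?_⟩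
  ext β
  exact and_congr_right fun _ => and_congr_right fun _ =>
    forall_congr' fun k => by rw [hwilf k]

lemma point_mem_of_unbounded (hC : IsPermClass C) (hunb : ¬ ∃ M : ℕ, ∀ n : ℕ, cnt C n ≤ M) :
    point ∈ C := by
  by_contra hpoint
  refine hunb ⟨1, fun n => ?_⟩
  have hempty : {τ | τ ∈ C ∧ τ.1 = n} ⊆ {empty} := fun τ hτ =>
    eq_empty_of_size_eq_zero <| Nat.eq_zero_of_not_pos fun hpos =>
      hpoint (hC _ _ (point_patternLE hpos) hτ.1)
  exact (Set.ncard_le_ncard hempty).trans_eq (Set.ncard_singleton empty)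

end Words

end PPerm

/-- **Theorem `thm-finind`.**  Any permutation class with finitely many
sum-indecomposable permutations and an unbounded growth function exhibits a Wilf
collapse. -/
theorem finitelyManyIndecomposables_wilfCollapse (C : Set PPerm)
    (hclass : IsPermClass C)
    (hfin : {π : PPerm | π ∈ C ∧ SumIndec π}.Finite)
    (hunb : ¬ ∃ M : ℕ, ∀ n : ℕ, cnt C n ≤ M) :
    WilfCollapse C := by
  have : Finite (PPerm.Letter C) := hfin
  have hpoint := PPerm.point_mem_of_unbounded hclass hunb
  have hcnt := PPerm.cnt_eq_ncard_level hclass hpoint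
  have hcollapse := WordOrder.isLittleO_ncard_level_momentMinimal
    (PPerm.downset_words hclass hpoint) (by simpa only [← hcnt] using hunb)
  simp only [← hcnt] at hcollapse
  have hle := PPerm.wilfcnt_le_ncard_level hclass hpoint
  exact (IsBigO.of_norm_le fun n => by simpa only [Real.norm_natCast, Nat.cast_le] using hle n
    ).trans_isLittleO hcollapse
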